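/- arXiv:2512.00500 — 8 statements merged into one kernel-verified Lean document; each statement's English description precedes it below -/
import Mathlib

section
/- For every HyperLTL_prop formula ψ and every finite set W ⊆ [0,1], the set V_W(⟦ψ⟧) of attained satisfaction values of ψ, namely {⟦ψ⟧_Π^T : Π a trace assignment into 𝕋_W, T ⊆ 𝕋_W nonempty}, is contained in the inductively defined set V_W(ψ); in particular ψ has only finitely many possible satisfaction values over weights in W. -/
open Set

noncomputable section

/-- A (weighted) trace assigns to each time step and atomic proposition a weight in `[0,1]`. -/
abbrev Trace (AP : Type) : Type := ℕ → AP → unitInterval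

/-- The traces whose weights all belong to `W` (the set `𝕋_W`). -/
def TracesW {AP : Type} (W : Set ℝ) : Set (Trace AP) :=
  {t | ∀ i p, (t i p : ℝ) ∈ W}

/-- Shifting a trace assignment: `Π[i,∞]`. -/
def shiftA {AP Var : Type} (ρ : Var → Trace AP) (i : ℕ) : Var → Trace AP :=
  fun π n => ρ π (n + i)

/-- `prefMin g i = min_{0 ≤ j < i} g j` (with the empty minimum being `1`). -/
def prefMin (g : ℕ → ℝ) : ℕ → ℝ
  | 0 => 1
  | n + 1 => min (prefMin g n) (g n)

/-- A signature of function symbols, each interpreted as a map `[0,1]^k → [0,1]`. -/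
structure PropSig where
  Fn : Type
  arity : Fn → ℕ
  interp : (f : Fn) → (Fin (arity f) → ℝ) → ℝ
  interp_mem : ∀ (f : Fn) (x : Fin (arity f) → ℝ),
      (∀ i, x i ∈ Set.Icc (0:ℝ) 1) → interp f x ∈ Set.Icc (0:ℝ) 1

/-- Quantifier-free HyperLTL_prop formulas. -/
inductive PropQF (AP Var : Type) (S : PropSig) : Type where
  | tt : PropQF AP Var S
  | ff : PropQF AP Var S
  | atom : AP → Var → PropQF AP Var S
  | app : (f : S.Fn) → (Fin (S.arity f) → PropQF AP Var S) → PropQF AP Var S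
  | next : PropQF AP Var S → PropQF AP Var S
  | untl : PropQF AP Var S → PropQF AP Var S → PropQF AP Var S

/-- HyperLTL_prop formulas: a prefix of quantifiers over a quantifier-free formula. -/
inductive PropForm (AP Var : Type) (S : PropSig) : Type where
  | qf : PropQF AP Var S → PropForm AP Var S
  | ex : Var → PropForm AP Var S → PropForm AP Var S
  | all : Var → PropForm AP Var S → PropForm AP Var S

variable {AP Var : Type} {S : PropSig}

/-- Satisfaction value of quantifier-free formulas. -/
def semQF : PropQF AP Var S → (Var → Trace AP) → Set (Trace AP) → ℝ
  | .tt, _, _ => 1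
  | .ff, _, _ => 0
  | .atom p π, ρ, _ => (ρ π 0 p : ℝ)
  | .app f args, ρ, T => S.interp f fun i => semQF (args i) ρ T
  | .next φ, ρ, T => semQF φ (shiftA ρ 1) T
  | .untl φ₁ φ₂, ρ, T =>
      ⨆ i : ℕ, min (semQF φ₂ (shiftA ρ i) T)
        (prefMin (fun j => semQF φ₁ (shiftA ρ j) T) i)

/-- Satisfaction value `⟦ψ⟧_Π^T` of HyperLTL_prop formulas. -/
def sem [DecidableEq Var] :
    PropForm AP Var S → (Var → Trace AP) → Set (Trace AP) → ℝ
  | .qf φ, ρ, T => semQF φ ρ T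
  | .ex π ψ, ρ, T => sSup ((fun t => sem ψ (Function.update ρ π t) T) '' T)
  | .all π ψ, ρ, T => sInf ((fun t => sem ψ (Function.update ρ π t) T) '' T)

/-- The inductively defined over-approximation `V_W(φ)` for quantifier-free formulas. -/
def VWqf (W : Set ℝ) : PropQF AP Var S → Set ℝ
  | .tt => {0, 1}
  | .ff => {0, 1}
  | .atom _ _ => W ∪ {0, 1}
  | .app f args =>
      {v | ∃ x : Fin (S.arity f) → ℝ, (∀ i, x i ∈ VWqf W (args i)) ∧ v = S.interp f x}
  | .next φ => VWqf W φ
  | .untl φ₁ φ₂ => VWqf W φ₁ ∪ VWqf W φ₂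

/-- The inductively defined set `V_W(ψ)`. -/
def VW (W : Set ℝ) : PropForm AP Var S → Set ℝ
  | .qf φ => VWqf W φ
  | .ex _ ψ => VW W ψ
  | .all _ ψ => VW W ψ

lemma prefMin_succ_mem {s : Set ℝ} {g : ℕ → ℝ} (hg : ∀ j, g j ∈ s) (hs : ∀ x ∈ s, x ≤ 1)
    (n : ℕ) : prefMin g (n + 1) ∈ s := by
  induction n with
  | zero => simpa [prefMin, min_eq_right (hs _ (hg 0))] using hg 0
  | succ n ih => exact min_rec' (· ∈ s) ih (hg _)

lemma shiftA_mem_TracesW {W : Set ℝ} {ρ : Var → Trace AP} (hρ : ∀ π, ρ π ∈ TracesW W) (i : ℕ)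
    (π : Var) : shiftA ρ i π ∈ TracesW W :=
  fun n p => hρ π (n + i) p

lemma VWqf_subset_Icc {W : Set ℝ} (hW : W ⊆ Set.Icc (0 : ℝ) 1) (φ : PropQF AP Var S) :
    VWqf W φ ⊆ Set.Icc (0 : ℝ) 1 := by
  have h01 : ({0, 1} : Set ℝ) ⊆ Set.Icc (0 : ℝ) 1 := by
    rintro x (rfl | rfl) <;> simp
  induction φ with
  | tt => exact h01
  | ff => exact h01
  | atom p π => exact union_subset hW h01
  | app f args ih =>
    rintro _ ⟨x, hx, rfl⟩
    exact S.interp_mem f x fun i => ih i (hx i)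
  | next φ ih => exact ih
  | untl φ₁ φ₂ ih₁ ih₂ => exact union_subset ih₁ ih₂

lemma finite_VWqf {W : Set ℝ} (hW : W.Finite) (φ : PropQF AP Var S) : (VWqf W φ).Finite := by
  induction φ with
  | tt => exact Set.toFinite {0, 1}
  | ff => exact Set.toFinite {0, 1}
  | atom p π => exact hW.union (Set.toFinite {0, 1})
  | app f args ih =>
    refine ((Set.Finite.pi' ih).image (S.interp f)).subset ?_
    rintro _ ⟨x, hx, rfl⟩
    exact ⟨x, hx, rfl⟩
  | next φ ih => exact ih
  | untl φ₁ φ₂ ih₁ ih₂ => exact ih₁.union ih₂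

lemma finite_VW {W : Set ℝ} (hW : W.Finite) (ψ : PropForm AP Var S) : (VW W ψ).Finite := by
  induction ψ with
  | qf φ => exact finite_VWqf hW φ
  | ex π ψ ih => exact ih
  | all π ψ ih => exact ih

lemma semQF_mem_VWqf {W : Set ℝ} (hWfin : W.Finite) (hWsub : W ⊆ Set.Icc (0 : ℝ) 1)
    (φ : PropQF AP Var S) (T : Set (Trace AP)) {ρ : Var → Trace AP}
    (hρ : ∀ π, ρ π ∈ TracesW W) : semQF φ ρ T ∈ VWqf W φ := by
  induction φ generalizing ρ with
  | tt => simp [semQF, VWqf]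
  | ff => simp [semQF, VWqf]
  | atom p π => exact Or.inl (hρ π 0 p)
  | app f args ih => exact ⟨_, fun i => ih i hρ, rfl⟩
  | next φ ih => exact ih (shiftA_mem_TracesW hρ 1)
  | untl φ₁ φ₂ ih₁ ih₂ =>
    have hmem (i : ℕ) : min (semQF φ₂ (shiftA ρ i) T)
        (prefMin (fun j => semQF φ₁ (shiftA ρ j) T) i) ∈ VWqf W φ₁ ∪ VWqf W φ₂ := by
      have h₂ := ih₂ (shiftA_mem_TracesW hρ i)
      cases i with
      | zero =>
        rw [prefMin, min_eq_left (VWqf_subset_Icc hWsub φ₂ h₂).2]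
        exact Or.inr h₂
      | succ n =>
        exact min_rec' (· ∈ VWqf W φ₁ ∪ VWqf W φ₂) (Or.inr h₂)
          (Or.inl (prefMin_succ_mem (fun j => ih₁ (shiftA_mem_TracesW hρ j))
            (fun x hx => (VWqf_subset_Icc hWsub φ₁ hx).2) n))
    have hsub := range_subset_iff.2 hmem
    exact hsub ((range_nonempty _).csSup_mem
      (((finite_VWqf hWfin φ₁).union (finite_VWqf hWfin φ₂)).subset hsub))

lemma sem_mem_VW [DecidableEq Var] {W : Set ℝ} (hWfin : W.Finite)
    (hWsub : W ⊆ Set.Icc (0 : ℝ) 1) (ψ : PropForm AP Var S) {T : Set (Trace AP)}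
    (hT : T ⊆ TracesW W) (hTne : T.Nonempty) {ρ : Var → Trace AP}
    (hρ : ∀ π, ρ π ∈ TracesW W) : sem ψ ρ T ∈ VW W ψ := by
  have hupd {ρ : Var → Trace AP} (hρ : ∀ π, ρ π ∈ TracesW W) (π : Var) {t : Trace AP}
      (ht : t ∈ T) : ∀ σ, Function.update ρ π t σ ∈ TracesW W :=
    (Function.forall_update_iff ρ fun _ s => s ∈ TracesW W).2 ⟨hT ht, fun σ _ => hρ σ⟩
  induction ψ generalizing ρ with
  | qf φ => exact semQF_mem_VWqf hWfin hWsub φ T hρ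
  | ex π ψ ih =>
    have hsub : (fun t => sem ψ (Function.update ρ π t) T) '' T ⊆ VW W ψ :=
      image_subset_iff.2 fun t ht => ih (hupd hρ π ht)
    exact hsub ((hTne.image _).csSup_mem ((finite_VW hWfin ψ).subset hsub))
  | all π ψ ih =>
    have hsub : (fun t => sem ψ (Function.update ρ π t) T) '' T ⊆ VW W ψ :=
      image_subset_iff.2 fun t ht => ih (hupd hρ π ht)
    exact hsub ((hTne.image _).csInf_mem ((finite_VW hWfin ψ).subset hsub))

/-- For every HyperLTL_prop formula `ψ` and every finite `W ⊆ [0,1]`, the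
set of attained satisfaction values of `ψ` over traces with weights in `W` is contained in
the inductively defined set `V_W(ψ)`; in particular it is finite. -/
theorem stmt_0 [DecidableEq Var]
    (W : Set ℝ) (hWfin : W.Finite) (hWsub : W ⊆ Set.Icc (0:ℝ) 1)
    (ψ : PropForm AP Var S) :
    {v : ℝ | ∃ (ρ : Var → Trace AP) (T : Set (Trace AP)),
        (∀ π, ρ π ∈ TracesW W) ∧ T ⊆ TracesW W ∧ T.Nonempty ∧ v = sem ψ ρ T}
      ⊆ VW W ψ ∧
    {v : ℝ | ∃ (ρ : Var → Trace AP) (T : Set (Trace AP)),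
        (∀ π, ρ π ∈ TracesW W) ∧ T ⊆ TracesW W ∧ T.Nonempty ∧ v = sem ψ ρ T}.Finite := by
  have hsub : {v : ℝ | ∃ (ρ : Var → Trace AP) (T : Set (Trace AP)),
      (∀ π, ρ π ∈ TracesW W) ∧ T ⊆ TracesW W ∧ T.Nonempty ∧ v = sem ψ ρ T} ⊆ VW W ψ := by
    rintro _ ⟨ρ, T, hρ, hT, hTne, rfl⟩
    exact sem_mem_VW hWfin hWsub ψ hT hTne hρ
  exact ⟨hsub, (finite_VW hWfin ψ).subset hsub⟩

end
end

section
/- Let p ∈ AP, let ⊕ be the binary function ⊕(x,y) = (x+y)/2 on [0,1], let ψ' = ∀π' ((¬p_π) ⊕ p_{π'}) and ψ = ∃π ψ'. Then: (a) there exist a trace assignment Π into Boolean traces and a nonempty set T of Boolean traces with ⟦ψ'⟧_Π^T = 0 (e.g. T = {t} with t[0](p) = 0 and Π(π)[0](p) = 1); and (b) for every trace assignment Π and every nonempty set T of Boolean traces, ⟦ψ⟧_Π^T ≥ 1/2. Consequently 0 lies in V_{{0,1}}(ψ) but not in the set of attained satisfaction values of ψ over Boolean traces, so the inclusion V_{{0,1}}(⟦ψ⟧)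 ⊆ V_{{0,1}}(ψ) is strict. -/
open Set

noncomputable section

/-- Boolean traces: all weights are `0` or `1`. -/
def IsBoolTrace {AP : Type} (t : Trace AP) : Prop :=
  ∀ i p, (t i p : ℝ) = 0 ∨ (t i p : ℝ) = 1

variable {AP Var : Type} {S : PropSig}

/-- The two function symbols used in Statement 2: `¬x = 1 - x` and `⊕(x,y) = (x+y)/2`. -/
inductive Fn2 : Type where
  | neg : Fn2
  | oplus : Fn2

def arity2 : Fn2 → ℕ
  | .neg => 1
  | .oplus => 2

def interp2 : (f : Fn2) → (Fin (arity2 f) → ℝ) → ℝ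
  | .neg, x => 1 - x ⟨0, by simp [arity2]⟩
  | .oplus, x => (x ⟨0, by simp [arity2]⟩ + x ⟨1, by simp [arity2]⟩) / 2

/-- The signature with `¬` and `⊕`. -/
def sig2 : PropSig where
  Fn := Fn2
  arity := arity2
  interp := interp2
  interp_mem := by
    intro f x hx
    cases f with
    | neg =>
        have h0 := hx ⟨0, by simp [arity2]⟩
        simp only [interp2, Set.mem_Icc] at *
        constructor <;> linarith [h0.1, h0.2]
    | oplus =>
        have h0 := hx ⟨0, by simp [arity2]⟩
        have h1 := hx ⟨1, by simp [arity2]⟩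
        simp only [interp2, Set.mem_Icc] at *
        constructor <;> linarith [h0.1, h0.2, h1.1, h1.2]

/-- The formula `ψ' = ∀π' ((¬p_π) ⊕ p_{π'})`. -/
def psi' (p : AP) (π π' : Var) : PropForm AP Var sig2 :=
  .all π' (.qf (.app .oplus ![.app .neg ![.atom p π], .atom p π']))

/-- The formula `ψ = ∃π ψ'`. -/
def psi (p : AP) (π π' : Var) : PropForm AP Var sig2 :=
  .ex π (psi' p π π')

theorem sem_psi' [DecidableEq Var] (p : AP) {π π' : Var} (hne : π ≠ π')
    (ρ : Var → Trace AP) (T : Set (Trace AP)) :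
    sem (psi' p π π') ρ T =
      sInf ((fun t : Trace AP => (1 - (ρ π 0 p : ℝ) + (t 0 p : ℝ)) / 2) '' T) := by
  have h (t : Trace AP) :
      sem (.qf (.app .oplus ![.app .neg ![.atom p π], .atom p π']) : PropForm AP Var sig2)
        (Function.update ρ π' t) T = (1 - (ρ π 0 p : ℝ) + (t 0 p : ℝ)) / 2 := by
    change (1 - (Function.update ρ π' t π 0 p : ℝ) + (Function.update ρ π' t π' 0 p : ℝ)) / 2 = _
    rw [Function.update_of_ne hne, Function.update_self]
  simp only [psi', sem] at h ⊢
  simp only [h]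

theorem sem_psi [DecidableEq Var] (p : AP) {π π' : Var} (hne : π ≠ π')
    (ρ : Var → Trace AP) (T : Set (Trace AP)) :
    sem (psi p π π') ρ T =
      sSup ((fun s : Trace AP =>
        sInf ((fun t : Trace AP => (1 - (s 0 p : ℝ) + (t 0 p : ℝ)) / 2) '' T)) '' T) := by
  simp only [psi, sem, sem_psi' p hne, Function.update_self]

theorem mem_VW_psi (p : AP) (π π' : Var) {a b : ℝ} (ha : a = 0 ∨ a = 1) (hb : b = 0 ∨ b = 1) :
    (1 - a + b) / 2 ∈ VW ({0, 1} : Set ℝ) (psi p π π') := by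
  refine ⟨![1 - a, b], Fin.forall_fin_two.2 ⟨⟨![a], Fin.forall_fin_one.2 ?_, rfl⟩, ?_⟩, rfl⟩
  · exact Or.inl ha
  · exact Or.inl hb

/-- The approximated values of `ψ` over Boolean weights form a finite set. -/
theorem finite_VW_psi (p : AP) (π π' : Var) :
    (VW ({0, 1} : Set ℝ) (psi p π π')).Finite := by
  refine (Set.toFinite ({0, 1 / 2, 1} : Set ℝ)).subset ?_
  rintro v ⟨x, hx, rfl⟩
  obtain ⟨y, hy, hxy⟩ := hx (0 : Fin 2)
  have h0 : y (0 : Fin 1) = 0 ∨ y (0 : Fin 1) = 1 := or_self_iff.1 (hy (0 : Fin 1))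
  have h1 : x (1 : Fin 2) = 0 ∨ x (1 : Fin 2) = 1 := or_self_iff.1 (hx (1 : Fin 2))
  change x (0 : Fin 2) = 1 - y (0 : Fin 1) at hxy
  change (x (0 : Fin 2) + x (1 : Fin 2)) / 2 ∈ _
  rw [hxy]
  rcases h0 with h0 | h0 <;> rcases h1 with h1 | h1 <;> rw [h0, h1] <;> norm_num

/-- Over Boolean traces, the infimum defining `ψ'` is an approximated value of `ψ`. -/
theorem sInf_mem_VW_psi (p : AP) (π π' : Var) {s : Trace AP} (hs : IsBoolTrace s)
    {T : Set (Trace AP)} (hT : T ⊆ {t | IsBoolTrace t}) (hT0 : T.Nonempty) :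
    sInf ((fun t : Trace AP => (1 - (s 0 p : ℝ) + (t 0 p : ℝ)) / 2) '' T) ∈
      VW ({0, 1} : Set ℝ) (psi p π π') := by
  have hsub : (fun t : Trace AP => (1 - (s 0 p : ℝ) + (t 0 p : ℝ)) / 2) '' T ⊆
      VW ({0, 1} : Set ℝ) (psi p π π') := by
    rintro _ ⟨t, ht, rfl⟩
    exact mem_VW_psi p π π' (hs 0 p) (hT ht 0 p)
  exact hsub ((hT0.image _).csInf_mem ((finite_VW_psi p π π').subset hsub))

theorem image_sInf_subset_VW_psi (p : AP) (π π' : Var)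
    {T : Set (Trace AP)} (hT : T ⊆ {t | IsBoolTrace t}) (hT0 : T.Nonempty) :
    (fun s : Trace AP =>
        sInf ((fun t : Trace AP => (1 - (s 0 p : ℝ) + (t 0 p : ℝ)) / 2) '' T)) '' T ⊆
      VW ({0, 1} : Set ℝ) (psi p π π') := by
  rintro _ ⟨s, hs, rfl⟩
  exact sInf_mem_VW_psi p π π' (hT hs) hT hT0

/-- The satisfaction values of `ψ` over Boolean traces are approximated values of `ψ`. -/
theorem sem_psi_mem_VW [DecidableEq Var] (p : AP) {π π' : Var} (hne : π ≠ π')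
    (ρ : Var → Trace AP) {T : Set (Trace AP)} (hT : T ⊆ {t | IsBoolTrace t})
    (hT0 : T.Nonempty) :
    sem (psi p π π') ρ T ∈ VW ({0, 1} : Set ℝ) (psi p π π') := by
  have hsub := image_sInf_subset_VW_psi p π π' hT hT0
  rw [sem_psi p hne]
  exact hsub ((hT0.image _).csSup_mem ((finite_VW_psi p π π').subset hsub))

/-- A nonempty set of Boolean traces has a member of least initial weight at `p`. -/
theorem exists_forall_initial_le (p : AP) {T : Set (Trace AP)}
    (hT : T ⊆ {t | IsBoolTrace t}) (hT0 : T.Nonempty) :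
    ∃ s ∈ T, ∀ t ∈ T, (s 0 p : ℝ) ≤ (t 0 p : ℝ) := by
  by_cases h : ∃ s ∈ T, (s 0 p : ℝ) = 0
  · obtain ⟨s, hs, hs0⟩ := h
    exact ⟨s, hs, fun t _ => hs0 ▸ (t 0 p).2.1⟩
  · push Not at h
    obtain ⟨s, hs⟩ := hT0
    exact ⟨s, hs, fun t ht => ((hT ht 0 p).resolve_left (h t ht)).symm ▸ (s 0 p).2.2⟩

theorem half_le_sem_psi [DecidableEq Var] (p : AP) {π π' : Var} (hne : π ≠ π')
    (ρ : Var → Trace AP) {T : Set (Trace AP)} (hT : T ⊆ {t | IsBoolTrace t})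
    (hT0 : T.Nonempty) :
    1 / 2 ≤ sem (psi p π π') ρ T := by
  obtain ⟨s, hs, hmin⟩ := exists_forall_initial_le p hT hT0
  rw [sem_psi p hne]
  refine le_csSup_of_le ((finite_VW_psi p π π').subset
    (image_sInf_subset_VW_psi p π π' hT hT0)).bddAbove ⟨s, hs, rfl⟩ (le_csInf (hT0.image _) ?_)
  rintro _ ⟨t, ht, rfl⟩
  have := hmin t ht
  dsimp only
  linarith

/-- (a) `ψ'` attains the value `0` over Boolean traces; (b) `ψ` always has
value at least `1/2` over Boolean traces; consequently `0 ∈ V_{{0,1}}(ψ)` but `0` is not an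
attained satisfaction value of `ψ`, so the inclusion `V_{{0,1}}(⟦ψ⟧) ⊆ V_{{0,1}}(ψ)` is
strict. -/
theorem stmt_2 [DecidableEq Var] (p : AP) (π π' : Var) (hne : π ≠ π') :
    (∃ (ρ : Var → Trace AP) (T : Set (Trace AP)),
        (∀ v, IsBoolTrace (ρ v)) ∧ T ⊆ {t | IsBoolTrace t} ∧ T.Nonempty ∧
        sem (psi' p π π') ρ T = 0) ∧
    (∀ (ρ : Var → Trace AP) (T : Set (Trace AP)),
        T ⊆ {t | IsBoolTrace t} → T.Nonempty → 1 / 2 ≤ sem (psi p π π') ρ T) ∧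
    (0 ∈ VW ({0, 1} : Set ℝ) (psi p π π')) ∧
    (0 ∉ {v : ℝ | ∃ (ρ : Var → Trace AP) (T : Set (Trace AP)),
        (∀ u, IsBoolTrace (ρ u)) ∧ T ⊆ {t | IsBoolTrace t} ∧ T.Nonempty ∧
        v = sem (psi p π π') ρ T}) ∧
    {v : ℝ | ∃ (ρ : Var → Trace AP) (T : Set (Trace AP)),
        (∀ u, IsBoolTrace (ρ u)) ∧ T ⊆ {t | IsBoolTrace t} ∧ T.Nonempty ∧
        v = sem (psi p π π') ρ T} ⊂ VW ({0, 1} : Set ℝ) (psi p π π') := by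
  have hzero : (0 : ℝ) ∈ VW ({0, 1} : Set ℝ) (psi p π π') := by
    simpa using mem_VW_psi p π π' (a := 1) (b := 0) (Or.inr rfl) (Or.inl rfl)
  have hnot : (0 : ℝ) ∉ {v : ℝ | ∃ (ρ : Var → Trace AP) (T : Set (Trace AP)),
      (∀ u, IsBoolTrace (ρ u)) ∧ T ⊆ {t | IsBoolTrace t} ∧ T.Nonempty ∧
      v = sem (psi p π π') ρ T} := by
    rintro ⟨ρ, T, -, hT, hT0, h⟩
    have := half_le_sem_psi p hne ρ hT hT0
    rw [← h] at this
    norm_num at this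
  refine ⟨⟨fun _ _ _ => 1, {fun _ _ => 0}, fun _ _ _ => Or.inr rfl, ?_,
    Set.singleton_nonempty _, ?_⟩, fun ρ T hT hT0 => half_le_sem_psi p hne ρ hT hT0,
    hzero, hnot, (Set.ssubset_iff_of_subset ?_).2 ⟨0, hzero, hnot⟩⟩
  · rintro _ rfl
    exact fun _ _ => Or.inl rfl
  · simp [sem_psi' p hne]
  · rintro _ ⟨ρ, T, -, hT, hT0, rfl⟩
    exact sem_psi_mem_VW p hne ρ hT hT0

end
end

section
/- For every HyperLTL_prop formula ψ whose free variables are among π₁,…,πₖ, every weighted Kripke structure K with weight set W, and every subset P ⊆ [0,1], there exists a nondeterministic Büchi automaton A over the alphabet W^{AP_{≤k}} whose accepted language is exactly the set of encoded traces t_Π for trace assignments Π = [π₁↦t₁,…,πₖ↦tₖ] such that t₁,…,tₖ ∈ 𝕋(K) and ⟦ψ⟧_Π^{𝕋(K)} ∈ P. -/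
open Set

noncomputable section

variable {AP Var : Type} {S : PropSig}

/-- The variables occurring in a quantifier-free formula. -/
def varsQF : PropQF AP Var S → Set Var
  | .tt => ∅
  | .ff => ∅
  | .atom _ π => {π}
  | .app _ args => ⋃ i, varsQF (args i)
  | .next φ => varsQF φ
  | .untl φ₁ φ₂ => varsQF φ₁ ∪ varsQF φ₂

/-- The free variables of a formula. -/
def freeVars : PropForm AP Var S → Set Var
  | .qf φ => varsQF φ
  | .ex π ψ => freeVars ψ \ {π}
  | .all π ψ => freeVars ψ \ {π}

/-- A weighted Kripke structure over `AP`: a finite state set, a finite weight set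
`W ⊆ [0,1]`, initial states, a total transition relation, and a weighted labeling. -/
structure Kripke (AP : Type) where
  S : Type
  [finS : Fintype S]
  W : Set ℝ
  Wfin : W.Finite
  Wsub : W ⊆ Set.Icc (0:ℝ) 1
  init : Set S
  tr : S → S → Prop
  total : ∀ s, ∃ s', tr s s'
  L : S → AP → unitInterval
  L_mem : ∀ s p, ((L s p : ℝ)) ∈ W

/-- The set `𝕋(K)` of traces of a Kripke structure. -/
def Kripke.Traces {AP : Type} (K : Kripke AP) : Set (Trace AP) :=
  {t | ∃ s : ℕ → K.S, s 0 ∈ K.init ∧ (∀ i, K.tr (s i) (s (i + 1))) ∧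
        ∀ i p, t i p = K.L (s i) p}

/-- A nondeterministic Büchi automaton over the alphabet `Alph`. -/
structure NBA (Alph : Type) where
  Q : Type
  [finQ : Fintype Q]
  init : Set Q
  δ : Q → Alph → Set Q
  acc : Set Q

/-- Büchi acceptance: some run visits the accepting set infinitely often. -/
def NBA.Accepts {Alph : Type} (A : NBA Alph) (w : ℕ → Alph) : Prop :=
  ∃ r : ℕ → A.Q, r 0 ∈ A.init ∧ (∀ i, r (i + 1) ∈ A.δ (r i) (w i)) ∧
    ∀ N, ∃ n, N ≤ n ∧ r n ∈ A.acc

/-- The encoding `t_Π` of a trace assignment `[π₁ ↦ t₁, …, π_k ↦ t_k]` as a single trace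
over the atomic propositions `AP_{≤k}`, identified with `AP × Fin k`. -/
def encode {AP : Type} {k : ℕ} (ts : Fin k → Trace AP) : Trace (AP × Fin k) :=
  fun n q => ts q.2 n q.1

/-- The suffix of an infinite word starting at position `i`. -/
def suffixFrom {α : Type} (w : ℕ → α) (i : ℕ) : ℕ → α := fun n => w (n + i)

theorem suffixFrom_suffixFrom {α : Type} (w : ℕ → α) (i j : ℕ) :
    suffixFrom (suffixFrom w i) j = suffixFrom w (i + j) := by
  funext n
  simp only [suffixFrom]
  congr 1
  omega

theorem suffixFrom_zero {α : Type} (w : ℕ → α) : suffixFrom w 0 = w := rfl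

/-- A finite-index congruence on finite words. The finite word formed by the first `n` letters of
`w` has type `type n w`. -/
structure WordCongruence (α : Type) where
  Carrier : Type
  [finite_carrier : Finite Carrier]
  type : ℕ → (ℕ → α) → Carrier
  type_local : ∀ n w w', (∀ i < n, w i = w' i) → type n w = type n w'
  type_append : ∀ n n' m m' w w', type n w = type n' w' →
    type m (suffixFrom w n) = type m' (suffixFrom w' n') → type (n + m) w = type (n' + m') w'

namespace WordCongruence

variable {α X : Type}

attribute [instance] WordCongruence.finite_carrier

/-- The type of the factor of `w` between positions `i` (included) and `j` (excluded). -/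
def seg (C : WordCongruence α) (w : ℕ → α) (i j : ℕ) : C.Carrier :=
  C.type (j - i) (suffixFrom w i)

theorem seg_append (C : WordCongruence α) {w w' : ℕ → α} {i j l i' j' l' : ℕ}
    (hij : i ≤ j) (hjl : j ≤ l) (hij' : i' ≤ j') (hjl' : j' ≤ l')
    (h₁ : C.seg w i j = C.seg w' i' j') (h₂ : C.seg w j l = C.seg w' j' l') :
    C.seg w i l = C.seg w' i' l' := by
  have h := C.type_append (j - i) (j' - i') (l - j) (l' - j') _ _ h₁ (by
    rw [suffixFrom_suffixFrom, suffixFrom_suffixFrom, Nat.add_sub_cancel' hij,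
      Nat.add_sub_cancel' hij']
    exact h₂)
  rwa [show j - i + (l - j) = l - i by omega, show j' - i' + (l' - j') = l' - i' by omega] at h

theorem seg_suffixFrom (C : WordCongruence α) (w : ℕ → α) (x i j : ℕ) :
    C.seg (suffixFrom w x) i j = C.seg w (x + i) (x + j) := by
  simp only [seg, suffixFrom_suffixFrom, Nat.add_sub_add_left]

theorem seg_congr (C : WordCongruence α) {w w' : ℕ → α} {i j : ℕ}
    (h : ∀ x, i ≤ x → x < j → w x = w' x) : C.seg w i j = C.seg w' i j :=
  C.type_local _ _ _ fun x hx => h (x + i) (by omega) (by omega)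

/-- `C` recognizes `f` if `f` takes the same value on any two infinite words that factor into
nonempty blocks with pairwise equal types. -/
def Recognizes (C : WordCongruence α) (f : (ℕ → α) → X) : Prop :=
  ∀ (w w' : ℕ → α) (a a' : ℕ → ℕ), StrictMono a → StrictMono a' → a 0 = 0 → a' 0 = 0 →
    (∀ k, C.seg w (a k) (a (k + 1)) = C.seg w' (a' k) (a' (k + 1))) → f w = f w'

end WordCongruence

/-- A function on infinite words is recognizable if some finite-index congruence recognizes it. -/
def Recognizable {α X : Type} (f : (ℕ → α) → X) : Prop :=
  ∃ C : WordCongruence α, C.Recognizes f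

theorem exists_blockIndex {a : ℕ → ℕ} (ha : StrictMono a) (h0 : a 0 = 0) :
    ∃ κ : ℕ → ℕ, ∀ i k, κ i = k ↔ a k ≤ i ∧ i < a (k + 1) := by
  have key : ∀ i, ∃ k, a k ≤ i ∧ i < a (k + 1) := by
    intro i
    induction i with
    | zero => exact ⟨0, h0.le, (Nat.zero_le _).trans_lt (ha Nat.zero_lt_one)⟩
    | succ i ih =>
      obtain ⟨k, hk₁, hk₂⟩ := ih
      by_cases h : i + 1 < a (k + 1)
      · exact ⟨k, by omega, h⟩
      · have := ha (Nat.lt_succ_self (k + 1))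
        exact ⟨k + 1, by omega, by simp only [Nat.succ_eq_add_one] at this; omega⟩
  choose κ hκ using key
  refine ⟨κ, fun i k => ⟨fun h => h ▸ hκ i, fun h => ?_⟩⟩
  have h₁ : κ i < k + 1 := ha.lt_iff_lt.1 ((hκ i).1.trans_lt h.2)
  have h₂ : k < κ i + 1 := ha.lt_iff_lt.1 (h.1.trans_lt (hκ i).2)
  omega

namespace WordCongruence

variable {α X : Type}

/-- Recording the image of the first letter under a finite colouring. -/
def firstLetter {C : Type} [Finite C] (c : α → C) : WordCongruence α where
  Carrier := Option C
  type n w := if n = 0 then none else some (c (w 0))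
  type_local n w w' h := by
    by_cases hn : n = 0
    · simp [hn]
    · simp [hn, h 0 (Nat.pos_of_ne_zero hn)]
  type_append n n' m m' w w' h₁ h₂ := by
    by_cases hn : n = 0 <;> by_cases hn' : n' = 0 <;> simp_all [suffixFrom]

/-- The product of a finite family of congruences. -/
def pi {ι : Type} [Finite ι] (C : ι → WordCongruence α) : WordCongruence α where
  Carrier := ∀ i, (C i).Carrier
  type n w i := (C i).type n w
  type_local n w w' h := funext fun i => (C i).type_local n w w' h
  type_append n n' m m' w w' h₁ h₂ := funext fun i =>
    (C i).type_append n n' m m' w w' (congrFun h₁ i) (congrFun h₂ i)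

theorem Recognizes.pi {ι : Type} [Finite ι] {C : ι → WordCongruence α} {i : ι}
    {f : (ℕ → α) → X} (h : (C i).Recognizes f) : (WordCongruence.pi C).Recognizes f :=
  fun w w' a a' ha ha' h0 h0' hs => h w w' a a' ha ha' h0 h0' fun k => congrFun (hs k) i

/-- Recording the type of the word without its first letter. -/
def tail (C : WordCongruence α) : WordCongruence α where
  Carrier := Prop × C.Carrier × C.Carrier
  type n w := (n = 0, C.seg w 0 n, C.seg w 1 n)
  type_local n w w' h := by
    rw [C.seg_congr fun x _ hx => h x hx, C.seg_congr fun x _ hx => h x hx]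
  type_append n n' m m' w w' h₁ h₂ := by
    simp only [Prod.mk.injEq, eq_iff_iff, seg_suffixFrom, Nat.add_zero] at h₁ h₂ ⊢
    refine ⟨by omega, C.seg_append (Nat.zero_le _) (Nat.le_add_right _ _) (Nat.zero_le _)
      (Nat.le_add_right _ _) h₁.2.1 h₂.2.1, ?_⟩
    rcases Nat.eq_zero_or_pos n with hn | hn
    · obtain rfl := hn
      obtain rfl := h₁.1.1 rfl
      exact h₂.2.2
    · exact C.seg_append hn (Nat.le_add_right _ _) (by omega) (Nat.le_add_right _ _)
        h₁.2.2 h₂.2.1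

/-- If two words factor into blocks with equal types, then suffixes starting in the `k`-th block
whose remainders of that block have equal types get the same value. -/
theorem Recognizes.suffix_eq {C : WordCongruence α} {f : (ℕ → α) → X} (hf : C.Recognizes f)
    {w w' : ℕ → α} {a a' : ℕ → ℕ} (ha : StrictMono a) (ha' : StrictMono a') {k i i' : ℕ}
    (hs : ∀ j, C.seg w (a (k + 1 + j)) (a (k + 1 + j + 1)) =
      C.seg w' (a' (k + 1 + j)) (a' (k + 1 + j + 1)))
    (hi : i < a (k + 1)) (hi' : i' < a' (k + 1))
    (h : C.seg w i (a (k + 1)) = C.seg w' i' (a' (k + 1))) :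
    f (suffixFrom w i) = f (suffixFrom w' i') := by
  have hb : ∀ {b : ℕ → ℕ} {x : ℕ}, StrictMono b → x < b (k + 1) →
      StrictMono (fun j : ℕ => Nat.casesOn j 0 (fun j => b (k + 1 + j) - x) : ℕ → ℕ) := by
    intro b x hb hx
    refine strictMono_nat_of_lt_succ fun j => ?_
    cases j with
    | zero => simpa using hx
    | succ j =>
      have h₁ : b (k + 1) ≤ b (k + 1 + j) := hb.monotone (by omega)
      have h₂ : b (k + 1 + j) < b (k + 1 + (j + 1)) := hb (by omega)
      simp only
      omega
  refine hf _ _ _ _ (hb ha hi) (hb ha' hi') rfl rfl fun j => ?_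
  have e : ∀ {b : ℕ → ℕ} {x : ℕ} (j : ℕ), StrictMono b → x < b (k + 1) →
      x + (b (k + 1 + j) - x) = b (k + 1 + j) := by
    intro b x j hb hx
    have h₁ : b (k + 1) ≤ b (k + 1 + j) := hb.monotone (by omega)
    omega
  rw [seg_suffixFrom, seg_suffixFrom]
  cases j with
  | zero =>
    simp only [Nat.add_zero]
    rw [Nat.add_sub_cancel' hi.le, Nat.add_sub_cancel' hi'.le]
    exact h
  | succ j =>
    simp only
    rw [e _ ha hi, e _ ha' hi', e _ ha hi, e _ ha' hi']
    exact hs j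

theorem Recognizes.tail {C : WordCongruence α} {f : (ℕ → α) → X} (hf : C.Recognizes f) :
    C.tail.Recognizes fun w => f (suffixFrom w 1) := by
  intro w w' a a' ha ha' h0 h0' hs
  have h2 : ∀ {b : ℕ → ℕ}, StrictMono b → b 0 = 0 → 0 < b 1 ∧ b 1 < b 2 := by
    intro b hb hb0
    exact ⟨hb0 ▸ hb Nat.zero_lt_one, hb (by omega)⟩
  have hh := C.tail.seg_append (Nat.zero_le _) (h2 ha h0).2.le (Nat.zero_le _) (h2 ha' h0').2.le
    (by simpa [h0, h0'] using hs 0) (hs 1)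
  have hs' : ∀ k, C.seg w (a k) (a (k + 1)) = C.seg w' (a' k) (a' (k + 1)) := fun k =>
    congrArg (fun x => x.2.1) (hs k)
  refine hf.suffix_eq (k := 1) ha ha' (fun j => hs' _) ?_ ?_ ?_
  · have := h2 ha h0
    show 1 < a 2
    omega
  · have := h2 ha' h0'
    show 1 < a' 2
    omega
  · exact congrArg (fun x => x.2.2) hh

/-- The types of the factors of `w` that start at a position in `[i, j)` and end at `l`. -/
def segsFrom (C : WordCongruence α) (w : ℕ → α) (i j l : ℕ) : Set C.Carrier :=
  {m | ∃ x, i ≤ x ∧ x < j ∧ C.seg w x l = m}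

theorem segsFrom_suffixFrom (C : WordCongruence α) (w : ℕ → α) (y i j l : ℕ) :
    C.segsFrom (suffixFrom w y) i j l = C.segsFrom w (y + i) (y + j) (y + l) := by
  ext m
  constructor
  · rintro ⟨x, h₁, h₂, rfl⟩
    exact ⟨y + x, by omega, by omega, (C.seg_suffixFrom w y x l).symm⟩
  · rintro ⟨x, h₁, h₂, rfl⟩
    refine ⟨x - y, by omega, by omega, ?_⟩
    rw [C.seg_suffixFrom, Nat.add_sub_cancel' (by omega)]

theorem segsFrom_union (C : WordCongruence α) (w : ℕ → α) {i j l : ℕ} (n : ℕ)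
    (h₁ : i ≤ j) (h₂ : j ≤ l) :
    C.segsFrom w i l n = C.segsFrom w i j n ∪ C.segsFrom w j l n := by
  ext m
  constructor
  · rintro ⟨x, hx₁, hx₂, rfl⟩
    rcases lt_or_ge x j with h | h
    · exact Or.inl ⟨x, hx₁, h, rfl⟩
    · exact Or.inr ⟨x, h, hx₂, rfl⟩
  · rintro (⟨x, hx₁, hx₂, rfl⟩ | ⟨x, hx₁, hx₂, rfl⟩)
    · exact ⟨x, hx₁, by omega, rfl⟩
    · exact ⟨x, by omega, hx₂, rfl⟩

theorem segsFrom_append (C : WordCongruence α) {w w' : ℕ → α} {i j n l i' j' n' l' : ℕ}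
    (hj : j ≤ n) (hn : n ≤ l) (hj' : j' ≤ n') (hn' : n' ≤ l')
    (h₁ : C.segsFrom w i j n = C.segsFrom w' i' j' n')
    (h₂ : C.seg w n l = C.seg w' n' l') :
    C.segsFrom w i j l = C.segsFrom w' i' j' l' := by
  ext m
  constructor
  · rintro ⟨x, hx₁, hx₂, rfl⟩
    obtain ⟨x', hx₁', hx₂', h⟩ : C.seg w x n ∈ C.segsFrom w' i' j' n' :=
      h₁ ▸ ⟨x, hx₁, hx₂, rfl⟩
    exact ⟨x', hx₁', hx₂', C.seg_append (by omega) hn' (by omega) hn h h₂.symm⟩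
  · rintro ⟨x, hx₁, hx₂, rfl⟩
    obtain ⟨x', hx₁', hx₂', h⟩ : C.seg w' x n' ∈ C.segsFrom w i j n :=
      h₁ ▸ ⟨x, hx₁, hx₂, rfl⟩
    exact ⟨x', hx₁', hx₂', C.seg_append (by omega) hn (by omega) hn' h h₂⟩

/-- For every position in `[i, j)`, the type of the factor from it to `j`, together with the types
of the factors that start earlier in `[i, j)`. -/
def splitTypes (C : WordCongruence α) (w : ℕ → α) (i j : ℕ) : Set (C.Carrier × Set C.Carrier) :=
  {m | ∃ x, i ≤ x ∧ x < j ∧ (C.seg w x j, C.segsFrom w i x j) = m}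

theorem splitTypes_suffixFrom (C : WordCongruence α) (w : ℕ → α) (y i j : ℕ) :
    C.splitTypes (suffixFrom w y) i j = C.splitTypes w (y + i) (y + j) := by
  ext m
  constructor
  · rintro ⟨x, h₁, h₂, rfl⟩
    exact ⟨y + x, by omega, by omega, by rw [C.seg_suffixFrom, C.segsFrom_suffixFrom]⟩
  · rintro ⟨x, h₁, h₂, rfl⟩
    refine ⟨x - y, by omega, by omega, ?_⟩
    rw [C.seg_suffixFrom, C.segsFrom_suffixFrom, Nat.add_sub_cancel' (by omega)]

theorem splitTypes_append_subset (C : WordCongruence α) {w w' : ℕ → α} {i j l i' j' l' : ℕ}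
    (hij : i ≤ j) (hjl : j ≤ l) (hij' : i' ≤ j') (hjl' : j' ≤ l')
    (h₁ : C.splitTypes w i j = C.splitTypes w' i' j')
    (h₂ : C.splitTypes w j l = C.splitTypes w' j' l')
    (h₃ : C.segsFrom w i j j = C.segsFrom w' i' j' j')
    (h₄ : C.seg w j l = C.seg w' j' l') :
    C.splitTypes w i l ⊆ C.splitTypes w' i' l' := by
  rintro _ ⟨x, hx₁, hx₂, rfl⟩
  rcases lt_or_ge x j with h | h
  · obtain ⟨x', hx₁', hx₂', hx'⟩ : (C.seg w x j, C.segsFrom w i x j) ∈ C.splitTypes w' i' j' :=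
      h₁ ▸ ⟨x, hx₁, h, rfl⟩
    rw [Prod.mk.injEq] at hx'
    refine ⟨x', hx₁', by omega, Prod.ext ?_ ?_⟩
    · exact C.seg_append hx₂'.le hjl' h.le hjl hx'.1 h₄.symm
    · exact C.segsFrom_append hx₂'.le hjl' h.le hjl hx'.2 h₄.symm
  · obtain ⟨x', hx₁', hx₂', hx'⟩ : (C.seg w x l, C.segsFrom w j x l) ∈ C.splitTypes w' j' l' :=
      h₂ ▸ ⟨x, h, hx₂, rfl⟩
    rw [Prod.mk.injEq] at hx'
    refine ⟨x', by omega, hx₂', Prod.ext hx'.1 ?_⟩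
    show C.segsFrom w' i' x' l' = C.segsFrom w i x l
    rw [C.segsFrom_union w' l' hij' hx₁', C.segsFrom_union w l hij h, hx'.2,
      C.segsFrom_append le_rfl hjl le_rfl hjl' h₃ h₄]

/-- The congruence that records the types of all suffixes of a word and their relative order. -/
def untl (C : WordCongruence α) : WordCongruence α where
  Carrier := C.Carrier × Set C.Carrier × Set (C.Carrier × Set C.Carrier)
  type n w := (C.seg w 0 n, C.segsFrom w 0 n n, C.splitTypes w 0 n)
  type_local n w w' h := by
    have hs : ∀ x, C.seg w x n = C.seg w' x n := fun x => C.seg_congr fun y _ hy => h y hy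
    simp only [splitTypes, segsFrom, hs]
  type_append n n' m m' w w' h₁ h₂ := by
    simp only [Prod.mk.injEq, seg_suffixFrom, segsFrom_suffixFrom, splitTypes_suffixFrom,
      Nat.add_zero] at h₁ h₂ ⊢
    obtain ⟨a₁, b₁, c₁⟩ := h₁
    obtain ⟨a₂, b₂, c₂⟩ := h₂
    have hn := Nat.zero_le n
    have hn' := Nat.zero_le n'
    have hm := Nat.le_add_right n m
    have hm' := Nat.le_add_right n' m'
    refine ⟨C.seg_append hn hm hn' hm' a₁ a₂, ?_, ?_⟩
    · rw [C.segsFrom_union w _ hn hm, C.segsFrom_union w' _ hn' hm', b₂,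
        C.segsFrom_append le_rfl hm le_rfl hm' b₁ a₂]
    · exact (C.splitTypes_append_subset hn hm hn' hm' c₁ c₂ b₁ a₂).antisymm
        (C.splitTypes_append_subset hn' hm' hn hm c₁.symm c₂.symm b₁.symm a₂.symm)

theorem untl_seg (C : WordCongruence α) (w : ℕ → α) {i j : ℕ} (h : i ≤ j) :
    C.untl.seg w i j = (C.seg w i j, C.segsFrom w i j j, C.splitTypes w i j) := by
  show (C.seg (suffixFrom w i) 0 (j - i), C.segsFrom (suffixFrom w i) 0 (j - i) (j - i),
    C.splitTypes (suffixFrom w i) 0 (j - i)) = _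
  rw [C.seg_suffixFrom, C.segsFrom_suffixFrom, C.splitTypes_suffixFrom, Nat.add_sub_cancel' h,
    Nat.add_zero]

end WordCongruence

theorem le_prefMin_iff {g : ℕ → ℝ} {c : ℝ} (i : ℕ) :
    c ≤ prefMin g i ↔ c ≤ 1 ∧ ∀ j < i, c ≤ g j := by
  induction i with
  | zero => simp [prefMin]
  | succ i ih =>
    simp only [prefMin, le_min_iff, ih, Nat.lt_succ_iff_lt_or_eq, or_imp, forall_and, forall_eq,
      and_assoc]

theorem prefMin_le_prefMin {g g' : ℕ → ℝ} {i i' : ℕ} (h : ∀ j < i, ∃ j' < i', g' j' = g j) :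
    prefMin g' i' ≤ prefMin g i := by
  have h' := (le_prefMin_iff (g := g') i').1 le_rfl
  refine (le_prefMin_iff i).2 ⟨h'.1, fun j hj => ?_⟩
  obtain ⟨j', hj', e⟩ := h j hj
  exact e ▸ h'.2 j' hj'

namespace WordCongruence

variable {α : Type}

theorem exists_mem_of_untl_eq {C : WordCongruence α} {f₁ f₂ : (ℕ → α) → ℝ}
    (h₁ : C.Recognizes f₁) (h₂ : C.Recognizes f₂) {w w' : ℕ → α} {a a' : ℕ → ℕ}
    (ha : StrictMono a) (ha' : StrictMono a') (h0 : a 0 = 0) (h0' : a' 0 = 0)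
    (hs : ∀ k, C.untl.seg w (a k) (a (k + 1)) = C.untl.seg w' (a' k) (a' (k + 1))) (i : ℕ) :
    ∃ i', f₂ (suffixFrom w i) = f₂ (suffixFrom w' i') ∧
      (∀ j < i, ∃ j' < i', f₁ (suffixFrom w' j') = f₁ (suffixFrom w j)) ∧
      (∀ j' < i', ∃ j < i, f₁ (suffixFrom w j) = f₁ (suffixFrom w' j')) := by
  have hle : ∀ k, a k ≤ a (k + 1) := fun k => ha.monotone (Nat.le_succ k)
  have hle' : ∀ k, a' k ≤ a' (k + 1) := fun k => ha'.monotone (Nat.le_succ k)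
  have hs' : ∀ k, C.seg w (a k) (a (k + 1)) = C.seg w' (a' k) (a' (k + 1)) ∧
      C.segsFrom w (a k) (a (k + 1)) (a (k + 1)) =
        C.segsFrom w' (a' k) (a' (k + 1)) (a' (k + 1)) ∧
      C.splitTypes w (a k) (a (k + 1)) = C.splitTypes w' (a' k) (a' (k + 1)) := by
    intro k
    have h := (C.untl_seg w (hle k)).symm.trans ((hs k).trans (C.untl_seg w' (hle' k)))
    exact ⟨congrArg Prod.fst h, congrArg (fun x => x.2.1) h, congrArg (fun x => x.2.2) h⟩
  obtain ⟨κ, hκ⟩ := exists_blockIndex ha h0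
  obtain ⟨κ', hκ'⟩ := exists_blockIndex ha' h0'
  have hi := (hκ i _).1 rfl
  obtain ⟨i', hi₁, hi₂, hi'⟩ : (C.seg w i (a (κ i + 1)), C.segsFrom w (a (κ i)) i (a (κ i + 1))) ∈
      C.splitTypes w' (a' (κ i)) (a' (κ i + 1)) := (hs' (κ i)).2.2 ▸ ⟨i, hi.1, hi.2, rfl⟩
  rw [Prod.mk.injEq] at hi'
  refine ⟨i', h₂.suffix_eq ha ha' (fun j => (hs' _).1) hi.2 hi₂ hi'.1.symm, fun j hj => ?_,
    fun j' hj' => ?_⟩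
  · have hj₀ := (hκ j _).1 rfl
    have hk : κ j < κ i + 1 := ha.lt_iff_lt.1 (hj₀.1.trans_lt (hj.trans hi.2))
    rcases Nat.lt_succ_iff_lt_or_eq.1 hk with h | h
    · obtain ⟨j', _, hj₂, e⟩ : C.seg w j (a (κ j + 1)) ∈
          C.segsFrom w' (a' (κ j)) (a' (κ j + 1)) (a' (κ j + 1)) :=
        (hs' (κ j)).2.1 ▸ ⟨j, hj₀.1, hj₀.2, rfl⟩
      have : a' (κ j + 1) ≤ a' (κ i) := ha'.monotone h
      exact ⟨j', by omega, h₁.suffix_eq ha' ha (fun j => (hs' _).1.symm) hj₂ hj₀.2 e⟩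
    · obtain ⟨j', _, hj₂, e⟩ : C.seg w j (a (κ i + 1)) ∈
          C.segsFrom w' (a' (κ i)) i' (a' (κ i + 1)) := hi'.2 ▸ ⟨j, h ▸ hj₀.1, hj, rfl⟩
      exact ⟨j', hj₂, h₁.suffix_eq ha' ha (fun j => (hs' _).1.symm) (hj₂.trans hi₂)
        (hj.trans hi.2) e⟩
  · have hj₀ := (hκ' j' _).1 rfl
    have hk : κ' j' < κ i + 1 := ha'.lt_iff_lt.1 (hj₀.1.trans_lt (hj'.trans hi₂))
    rcases Nat.lt_succ_iff_lt_or_eq.1 hk with h | h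
    · obtain ⟨j, _, hj₂, e⟩ : C.seg w' j' (a' (κ' j' + 1)) ∈
          C.segsFrom w (a (κ' j')) (a (κ' j' + 1)) (a (κ' j' + 1)) :=
        (hs' (κ' j')).2.1 ▸ ⟨j', hj₀.1, hj₀.2, rfl⟩
      have : a (κ' j' + 1) ≤ a (κ i) := ha.monotone h
      exact ⟨j, by omega, h₁.suffix_eq ha ha' (fun j => (hs' _).1) hj₂ hj₀.2 e⟩
    · obtain ⟨j, _, hj₂, e⟩ : C.seg w' j' (a' (κ i + 1)) ∈
          C.segsFrom w (a (κ i)) i (a (κ i + 1)) := hi'.2 ▸ ⟨j', h ▸ hj₀.1, hj', rfl⟩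
      exact ⟨j, hj₂, h₁.suffix_eq ha ha' (fun j => (hs' _).1) (hj₂.trans hi.2)
        (hj'.trans hi₂) e⟩

theorem Recognizes.untl {C : WordCongruence α} {f₁ f₂ : (ℕ → α) → ℝ}
    (h₁ : C.Recognizes f₁) (h₂ : C.Recognizes f₂) :
    C.untl.Recognizes fun w => ⨆ i : ℕ, min (f₂ (suffixFrom w i))
      (prefMin (fun j => f₁ (suffixFrom w j)) i) := by
  have key : ∀ {w w' : ℕ → α} {a a' : ℕ → ℕ}, StrictMono a → StrictMono a' → a 0 = 0 → a' 0 = 0 →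
      (∀ k, C.untl.seg w (a k) (a (k + 1)) = C.untl.seg w' (a' k) (a' (k + 1))) →
      range (fun i : ℕ => min (f₂ (suffixFrom w i))
        (prefMin (fun j => f₁ (suffixFrom w j)) i)) ⊆
      range (fun i : ℕ => min (f₂ (suffixFrom w' i))
        (prefMin (fun j => f₁ (suffixFrom w' j)) i)) := by
    rintro w w' a a' ha ha' h0 h0' hs _ ⟨i, rfl⟩
    obtain ⟨i', e, hl, hr⟩ := exists_mem_of_untl_eq h₁ h₂ ha ha' h0 h0' hs i
    refine ⟨i', ?_⟩
    simp only [e, (prefMin_le_prefMin hl).antisymm (prefMin_le_prefMin hr)]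
  intro w w' a a' ha ha' h0 h0' hs
  exact congrArg sSup ((key ha ha' h0 h0' hs).antisymm (key ha' ha h0' h0 fun k => (hs k).symm))

end WordCongruence

namespace Kripke

/-- The trace assignment induced by assigning a sequence of states to each variable. -/
def assignment (K : Kripke AP) (σ : ℕ → Var → K.S) : Var → Trace AP :=
  fun π n => K.L (σ n π)

/-- Reassign the variable `π` to the state sequence `s`. -/
def updateRun [DecidableEq Var] (K : Kripke AP) (σ : ℕ → Var → K.S) (π : Var) (s : ℕ → K.S) :
    ℕ → Var → K.S :=
  fun n => Function.update (σ n) π (s n)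

theorem assignment_updateRun [DecidableEq Var] (K : Kripke AP) (σ : ℕ → Var → K.S) (π : Var)
    (s : ℕ → K.S) :
    K.assignment (K.updateRun σ π s) =
      Function.update (K.assignment σ) π fun n => K.L (s n) := by
  funext π' n
  by_cases h : π' = π
  · subst h
    simp [assignment, updateRun]
  · simp [assignment, updateRun, h]

theorem mem_traces_iff (K : Kripke AP) {t : Trace AP} :
    t ∈ K.Traces ↔ ∃ s : ℕ → K.S, s 0 ∈ K.init ∧ (∀ i, K.tr (s i) (s (i + 1))) ∧
      t = fun i => K.L (s i) := by
  simp only [Traces, mem_ofPred_eq, funext_iff]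

theorem recognizable_semQF (K : Kripke AP) (φ : PropQF AP Var S) :
    Recognizable fun σ : ℕ → Var → K.S => semQF φ (K.assignment σ) K.Traces := by
  have := K.finS
  induction φ with
  | tt => exact ⟨.firstLetter fun _ => (), fun _ _ _ _ _ _ _ _ _ => rfl⟩
  | ff => exact ⟨.firstLetter fun _ => (), fun _ _ _ _ _ _ _ _ _ => rfl⟩
  | atom p π =>
    refine ⟨.firstLetter fun s => s π, fun w w' a a' ha ha' h0 h0' hs => ?_⟩
    have h1 : a 1 ≠ 0 := by have := ha Nat.zero_lt_one; omega
    have h1' : a' 1 ≠ 0 := by have := ha' Nat.zero_lt_one; omega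
    have h := hs 0
    simp only [WordCongruence.seg, WordCongruence.firstLetter, h0, h0', zero_add, Nat.sub_zero,
      h1, h1', if_false, suffixFrom_zero, Option.some.injEq] at h
    simp only [semQF, assignment, h]
  | app f args ih =>
    choose C hC using ih
    refine ⟨.pi C, fun w w' a a' ha ha' h0 h0' hs => congrArg (S.interp f) (funext fun i => ?_)⟩
    exact (hC i).pi w w' a a' ha ha' h0 h0' hs
  | next φ ih =>
    obtain ⟨C, hC⟩ := ih
    exact ⟨C.tail, hC.tail⟩
  | untl φ₁ φ₂ ih₁ ih₂ =>
    obtain ⟨C₁, h₁⟩ := ih₁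
    obtain ⟨C₂, h₂⟩ := ih₂
    have h₁' := WordCongruence.Recognizes.pi (C := fun b : Bool => if b then C₁ else C₂)
      (i := true) h₁
    have h₂' := WordCongruence.Recognizes.pi (C := fun b : Bool => if b then C₁ else C₂)
      (i := false) h₂
    exact ⟨_, h₁'.untl h₂'⟩

/-- For every path of `K` with `n` transitions, its endpoints and the type of the first `n` letters
of `σ` after reassigning `π` to this path. -/
def pathTypeSet [DecidableEq Var] (K : Kripke AP) (C : WordCongruence (Var → K.S)) (π : Var)
    (n : ℕ) (σ : ℕ → Var → K.S) : Set (C.Carrier × K.S × K.S) :=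
  {m | ∃ s : ℕ → K.S, (∀ i < n, K.tr (s i) (s (i + 1))) ∧
    (C.type n (K.updateRun σ π s), s 0, s n) = m}

theorem pathTypeSet_append_subset [DecidableEq Var] (K : Kripke AP)
    (C : WordCongruence (Var → K.S)) (π : Var) {n n' m m' : ℕ} {σ σ' : ℕ → Var → K.S}
    (h₁ : K.pathTypeSet C π n σ ⊆ K.pathTypeSet C π n' σ')
    (h₂ : K.pathTypeSet C π m (suffixFrom σ n) ⊆ K.pathTypeSet C π m' (suffixFrom σ' n')) :
    K.pathTypeSet C π (n + m) σ ⊆ K.pathTypeSet C π (n' + m') σ' := by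
  rintro _ ⟨s, hs, rfl⟩
  obtain ⟨s₁, hs₁, e₁⟩ := h₁ ⟨s, fun i hi => hs i (by omega), rfl⟩
  obtain ⟨s₂, hs₂, e₂⟩ := h₂ ⟨suffixFrom s n, fun i hi => by
    have := hs (i + n) (by omega)
    rwa [show i + n + 1 = i + 1 + n by omega] at this, rfl⟩
  simp only [Prod.mk.injEq, suffixFrom, zero_add] at e₁ e₂
  have hl : ∀ i ≤ n', (if i < n' then s₁ i else s₂ (i - n')) = s₁ i := by
    intro i hi
    rcases hi.lt_or_eq with h | rfl
    · simp [h]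
    · simp [e₁, e₂]
  have hr : ∀ i, (if i + n' < n' then s₁ (i + n') else s₂ (i + n' - n')) = s₂ i := by
    intro i
    simp
  refine ⟨fun i => if i < n' then s₁ i else s₂ (i - n'), fun i hi => ?_, ?_⟩
  · rcases lt_or_ge i n' with h | h
    · simp only [hl i h.le, hl (i + 1) h]
      exact hs₁ i h
    · obtain ⟨j, rfl⟩ := Nat.exists_eq_add_of_le' h
      have hr' := hr (j + 1)
      rw [show j + 1 + n' = j + n' + 1 by omega] at hr'
      simp only [hr, hr']
      exact hs₂ j (by omega)
  · rw [Prod.mk.injEq, Prod.mk.injEq]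
    refine ⟨C.type_append _ _ _ _ _ _ ?_ ?_, ?_, ?_⟩
    · rw [← e₁.1]
      exact C.type_local _ _ _ fun i hi => by simp only [updateRun, hl i hi.le]
    · refine Eq.trans ?_ e₂.1
      exact C.type_local _ _ _ fun i hi => by simp only [updateRun, suffixFrom, hr]
    · exact (hl 0 (Nat.zero_le _)).trans e₁.2.1
    · rw [Nat.add_comm n' m', Nat.add_comm n m]
      exact (hr m').trans e₂.2.2

/-- The congruence given by `Kripke.pathTypeSet`. -/
def pathTypes [DecidableEq Var] (K : Kripke AP) (C : WordCongruence (Var → K.S)) (π : Var) :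
    WordCongruence (Var → K.S) where
  Carrier := Set (C.Carrier × K.S × K.S)
  finite_carrier := by
    have := K.finS
    infer_instance
  type := K.pathTypeSet C π
  type_local n σ σ' h := by
    have : ∀ s, C.type n (K.updateRun σ π s) = C.type n (K.updateRun σ' π s) := fun s =>
      C.type_local _ _ _ fun i hi => by simp only [updateRun, h i hi]
    simp only [pathTypeSet, this]
  type_append _ _ _ _ _ _ h₁ h₂ :=
    (K.pathTypeSet_append_subset C π h₁.subset h₂.subset).antisymm
      (K.pathTypeSet_append_subset C π h₁.symm.subset h₂.symm.subset)

theorem image_traces_subset [DecidableEq Var] (K : Kripke AP) {C : WordCongruence (Var → K.S)}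
    {X : Type} {f : (Var → Trace AP) → X}
    (hf : C.Recognizes fun σ : ℕ → Var → K.S => f (K.assignment σ)) (π : Var)
    {σ σ' : ℕ → Var → K.S} {a a' : ℕ → ℕ} (ha : StrictMono a) (ha' : StrictMono a')
    (h0 : a 0 = 0) (h0' : a' 0 = 0)
    (hs : ∀ k, (K.pathTypes C π).seg σ (a k) (a (k + 1)) =
      (K.pathTypes C π).seg σ' (a' k) (a' (k + 1))) :
    (fun t => f (Function.update (K.assignment σ) π t)) '' K.Traces ⊆
      (fun t => f (Function.update (K.assignment σ') π t)) '' K.Traces := by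
  rintro _ ⟨t, ht, rfl⟩
  obtain ⟨s, hs0, hstr, rfl⟩ := K.mem_traces_iff.1 ht
  have key : ∀ k, ∃ s' : ℕ → K.S,
      (∀ i < a' (k + 1) - a' k, K.tr (s' i) (s' (i + 1))) ∧
      C.type (a' (k + 1) - a' k) (K.updateRun (suffixFrom σ' (a' k)) π s') =
        C.seg (K.updateRun σ π s) (a k) (a (k + 1)) ∧
      s' 0 = s (a k) ∧ s' (a' (k + 1) - a' k) = s (a (k + 1)) := by
    intro k
    have hk : K.pathTypeSet C π (a (k + 1) - a k) (suffixFrom σ (a k)) =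
      K.pathTypeSet C π (a' (k + 1) - a' k) (suffixFrom σ' (a' k)) := hs k
    obtain ⟨s', h₁, h₂⟩ := hk.subset ⟨suffixFrom s (a k), fun i _ => by
      have := hstr (i + a k)
      rwa [show i + a k + 1 = i + 1 + a k by omega] at this, rfl⟩
    rw [Prod.mk.injEq, Prod.mk.injEq] at h₂
    refine ⟨s', h₁, h₂.1, h₂.2.1.trans ?_, h₂.2.2.trans ?_⟩
    · simp only [suffixFrom, zero_add]
    · simp only [suffixFrom]
      rw [Nat.sub_add_cancel (ha.monotone (Nat.le_succ k))]
  choose s' htr htype hfst hlst using key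
  obtain ⟨κ, hκ⟩ := exists_blockIndex ha' h0'
  set r : ℕ → K.S := fun i => s' (κ i) (i - a' (κ i)) with hr
  have hrk : ∀ k i, a' k ≤ i → i ≤ a' (k + 1) → r i = s' k (i - a' k) := by
    intro k i h₁ h₂
    rcases h₂.lt_or_eq with h | rfl
    · simp only [hr, (hκ i k).2 ⟨h₁, h⟩]
    · have := (hκ (a' (k + 1)) (k + 1)).2 ⟨le_rfl, ha' (Nat.lt_succ_self _)⟩
      simp only [hr, this, Nat.sub_self, hfst, hlst]
  refine ⟨fun i => K.L (r i), K.mem_traces_iff.2 ⟨r, ?_, fun i => ?_, rfl⟩, ?_⟩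
  · rw [hrk 0 0 h0'.le (Nat.zero_le _), h0', hfst, h0]
    exact hs0
  · have hi := (hκ i _).1 rfl
    rw [hrk _ i hi.1 hi.2.le, hrk _ (i + 1) (by omega) hi.2,
      show i + 1 - a' (κ i) = i - a' (κ i) + 1 by omega]
    exact htr _ _ (by omega)
  · simp only [← assignment_updateRun]
    refine hf _ _ a' a ha' ha h0' h0 fun k => ?_
    rw [← htype k]
    refine C.type_local _ _ _ fun i hi => ?_
    simp only [suffixFrom, updateRun]
    rw [hrk k (i + a' k) (by omega) (by omega), Nat.add_sub_cancel]

theorem image_traces_recognizes [DecidableEq Var] (K : Kripke AP)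
    {C : WordCongruence (Var → K.S)} {X : Type} {f : (Var → Trace AP) → X}
    (hf : C.Recognizes fun σ : ℕ → Var → K.S => f (K.assignment σ)) (π : Var) :
    (K.pathTypes C π).Recognizes fun σ : ℕ → Var → K.S =>
      (fun t => f (Function.update (K.assignment σ) π t)) '' K.Traces :=
  fun _ _ _ _ ha ha' h0 h0' hs => (K.image_traces_subset hf π ha ha' h0 h0' hs).antisymm
    (K.image_traces_subset hf π ha' ha h0' h0 fun k => (hs k).symm)

theorem recognizable_sem [DecidableEq Var] (K : Kripke AP) (ψ : PropForm AP Var S) :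
    Recognizable fun σ : ℕ → Var → K.S => sem ψ (K.assignment σ) K.Traces := by
  induction ψ with
  | qf φ => exact K.recognizable_semQF φ
  | ex π ψ ih =>
    obtain ⟨C, hC⟩ := ih
    exact ⟨_, fun w w' a a' ha ha' h0 h0' hs => congrArg sSup
      (K.image_traces_recognizes (f := fun ρ => sem ψ ρ K.Traces) hC π w w' a a' ha ha' h0 h0' hs)⟩
  | all π ψ ih =>
    obtain ⟨C, hC⟩ := ih
    exact ⟨_, fun w w' a a' ha ha' h0 h0' hs => congrArg sInf
      (K.image_traces_recognizes (f := fun ρ => sem ψ ρ K.Traces) hC π w w' a a' ha ha' h0 h0' hs)⟩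

end Kripke

theorem semQF_congr (φ : PropQF AP Var S) (T : Set (Trace AP)) :
    ∀ {ρ ρ' : Var → Trace AP}, (∀ π ∈ varsQF φ, ρ π = ρ' π) → semQF φ ρ T = semQF φ ρ' T := by
  have hshift : ∀ {V : Set Var} {ρ ρ' : Var → Trace AP} (i : ℕ), (∀ π ∈ V, ρ π = ρ' π) →
      ∀ π ∈ V, shiftA ρ i π = shiftA ρ' i π := by
    intro V ρ ρ' i h π hπ
    funext n
    simp only [shiftA, h π hπ]
  induction φ with
  | tt => exact fun _ => rfl
  | ff => exact fun _ => rfl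
  | atom p π => exact fun h => by simp only [semQF, h π rfl]
  | app f args ih =>
    exact fun h => congrArg (S.interp f) (funext fun i =>
      ih i fun π hπ => h π (mem_iUnion.2 ⟨i, hπ⟩))
  | next φ ih => exact fun h => ih (hshift 1 h)
  | untl φ₁ φ₂ ih₁ ih₂ =>
    intro ρ ρ' h
    have e₁ : ∀ i, semQF φ₁ (shiftA ρ i) T = semQF φ₁ (shiftA ρ' i) T := fun i =>
      ih₁ (hshift i fun π hπ => h π (Or.inl hπ))
    have e₂ : ∀ i, semQF φ₂ (shiftA ρ i) T = semQF φ₂ (shiftA ρ' i) T := fun i =>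
      ih₂ (hshift i fun π hπ => h π (Or.inr hπ))
    simp only [semQF, e₁, e₂]

theorem sem_congr [DecidableEq Var] (ψ : PropForm AP Var S) (T : Set (Trace AP)) :
    ∀ {ρ ρ' : Var → Trace AP}, (∀ π ∈ freeVars ψ, ρ π = ρ' π) → sem ψ ρ T = sem ψ ρ' T := by
  have hupd : ∀ {V : Set Var} {π : Var} {ρ ρ' : Var → Trace AP} (t : Trace AP),
      (∀ π' ∈ V \ {π}, ρ π' = ρ' π') →
      ∀ π' ∈ V, Function.update ρ π t π' = Function.update ρ' π t π' := by
    intro V π ρ ρ' t h π' hπ'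
    by_cases e : π' = π
    · subst e
      simp
    · simp [e, h π' ⟨hπ', e⟩]
  induction ψ with
  | qf φ => exact semQF_congr φ T
  | ex π ψ ih =>
    exact fun h => congrArg sSup (image_congr fun t _ => ih (hupd t h))
  | all π ψ ih =>
    exact fun h => congrArg sInf (image_congr fun t _ => ih (hupd t h))

namespace WordCongruence

variable {α X : Type}

/-- The word `w` factors into a block of type `s` followed by infinitely many blocks of
type `e`. -/
def Factors (C : WordCongruence α) (w : ℕ → α) (s e : C.Carrier) : Prop :=
  ∃ a : ℕ → ℕ, StrictMono a ∧ a 0 = 0 ∧ C.seg w (a 0) (a 1) = s ∧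
    ∀ k, C.seg w (a (k + 1)) (a (k + 2)) = e

theorem exists_factors (C : WordCongruence α) (w : ℕ → α) : ∃ s e, C.Factors w s e := by
  set U : Ultrafilter ℕ := Filter.hyperfilter ℕ
  have hlim : ∀ g : ℕ → C.Carrier, ∃ m, ∀ᶠ j in (U : Filter ℕ), g j = m := by
    intro g
    obtain ⟨m, -, hm⟩ := (Ultrafilter.finite_biUnion_mem_iff (f := U) (is := Set.univ)
      (s := fun m : C.Carrier => {j | g j = m}) Set.finite_univ).1
      (Filter.mem_of_superset Filter.univ_mem fun j _ => by simp)
    exact ⟨m, hm⟩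
  choose c hc using fun i => hlim (C.seg w i)
  obtain ⟨e, he⟩ := hlim c
  have hgt : ∀ i, ∀ᶠ j in (U : Filter ℕ), i < j := fun i => by
    have : (U : Filter ℕ) ≤ Filter.cofinite := Filter.hyperfilter_le_cofinite
    rw [Nat.cofinite_eq_atTop] at this
    exact this (Filter.eventually_gt_atTop i)
  have hnext : ∀ x : {i // c i = e ∧ 0 < i}, ∃ y : {i // c i = e ∧ 0 < i},
      x.1 < y.1 ∧ C.seg w x.1 y.1 = e := by
    rintro ⟨i, hi, hi0⟩
    obtain ⟨j, ⟨h₁, h₂⟩, h₃⟩ := ((he.and (hc i)).and (hgt i)).exists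
    exact ⟨⟨j, h₁, by omega⟩, h₃, h₂.trans hi⟩
  obtain ⟨i₀, hi₀⟩ := (he.and (hgt 0)).exists
  choose nx hnx using hnext
  set b : ℕ → {i // c i = e ∧ 0 < i} := fun k => nx^[k] ⟨i₀, hi₀⟩
  have hb : ∀ k, b (k + 1) = nx (b k) := fun k => Function.iterate_succ_apply' _ _ _
  refine ⟨_, e, fun k => Nat.casesOn k 0 fun k => (b k).1, strictMono_nat_of_lt_succ fun k => ?_,
    rfl, rfl, fun k => ?_⟩
  · cases k with
    | zero => exact (b 0).2.2
    | succ k =>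
      show (b k).1 < (b (k + 1)).1
      rw [hb]
      exact (hnx _).1
  · show C.seg w (b k).1 (b (k + 1)).1 = e
    rw [hb]
    exact (hnx _).2

theorem Recognizes.eq_of_factors {C : WordCongruence α} {f : (ℕ → α) → X}
    (hf : C.Recognizes f) {w w' : ℕ → α} {s e : C.Carrier} (h : C.Factors w s e)
    (h' : C.Factors w' s e) : f w = f w' := by
  obtain ⟨a, ha, h0, hs, he⟩ := h
  obtain ⟨a', ha', h0', hs', he'⟩ := h'
  refine hf w w' a a' ha ha' h0 h0' fun k => ?_
  cases k with
  | zero => exact hs.trans hs'.symm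
  | succ k => exact (he k).trans (he' k).symm

/-- `C.Step m x m'` says that extending a word of type `m` by the letter `x` gives a word of
type `m'`. -/
def Step (C : WordCongruence α) (m : C.Carrier) (x : α) (m' : C.Carrier) : Prop :=
  ∃ (n : ℕ) (u : ℕ → α), C.seg u 0 n = m ∧ u n = x ∧ C.seg u 0 (n + 1) = m'

theorem step_seg_iff (C : WordCongruence α) {w : ℕ → α} {i j : ℕ} (h : i ≤ j) {m : C.Carrier} :
    C.Step (C.seg w i j) (w j) m ↔ m = C.seg w i (j + 1) := by
  constructor
  · rintro ⟨n, u, h₁, h₂, rfl⟩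
    refine C.seg_append (Nat.zero_le _) (Nat.le_succ n) h (Nat.le_succ j) h₁ ?_
    simp only [seg, Nat.add_sub_cancel_left]
    refine C.type_local _ _ _ fun y hy => ?_
    obtain rfl : y = 0 := by omega
    simpa [suffixFrom] using h₂
  · rintro rfl
    refine ⟨j - i, suffixFrom w i, ?_, ?_, ?_⟩
    · rw [seg_suffixFrom, Nat.add_zero, Nat.add_sub_cancel' h]
    · rw [suffixFrom, Nat.sub_add_cancel h]
    · rw [seg_suffixFrom, Nat.add_zero, ← Nat.add_assoc, Nat.add_sub_cancel' h]

theorem seg_self (C : WordCongruence α) (w w' : ℕ → α) (i j : ℕ) :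
    C.seg w i i = C.seg w' j j := by
  simp only [seg, Nat.sub_self]
  exact C.type_local _ _ _ fun y hy => absurd hy (Nat.not_lt_zero y)

/-- The automaton accepting the words that factor into one block of type `s` and infinitely many
blocks of type `e`, for some pair `(s, e)` satisfying `G`. A state consists of the type the current
block has to reach, the type `e`, the type of the part of the current block read so far, and a flag
telling whether a block has just been completed. -/
def toNBA (C : WordCongruence α) (G : C.Carrier → C.Carrier → Prop) : NBA α where
  Q := C.Carrier × C.Carrier × C.Carrier × Bool
  finQ := Fintype.ofFinite _
  init := {q | G q.1 q.2.1 ∧ ∃ u, q.2.2.1 = C.seg u 0 0}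
  δ q x := {q' | q'.2.1 = q.2.1 ∧ ∃ m, C.Step q.2.2.1 x m ∧
    ((q'.1 = q.1 ∧ q'.2.2 = (m, false)) ∨
      (m = q.1 ∧ q'.1 = q.2.1 ∧ q'.2.2.2 = true ∧ ∃ u, q'.2.2.1 = C.seg u 0 0))}
  acc := {q | q.2.2.2 = true}

theorem toNBA_accepts_of_factors (C : WordCongruence α) {G : C.Carrier → C.Carrier → Prop}
    {w : ℕ → α} {s e : C.Carrier} (hG : G s e) (h : C.Factors w s e) :
    (C.toNBA G).Accepts w := by
  obtain ⟨a, ha, h0, hs, he⟩ := h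
  obtain ⟨κ, hκ⟩ := exists_blockIndex ha h0
  have hκa : ∀ k, κ (a k) = k := fun k => (hκ _ _).2 ⟨le_rfl, ha (Nat.lt_succ_self k)⟩
  have hκ0 : κ 0 = 0 := by rw [← h0, hκa, h0]
  have hblock : ∀ k, C.seg w (a k) (a (k + 1)) = if k = 0 then s else e := by
    intro k
    cases k with
    | zero => simpa using hs
    | succ k => simpa using he k
  refine ⟨fun i => (if κ i = 0 then s else e, e, C.seg w (a (κ i)) i, decide (i = a (κ i))),
    ?_, fun i => ⟨rfl, C.seg w (a (κ i)) (i + 1), ?_, ?_⟩, fun N => ⟨a N, ha.le_apply, ?_⟩⟩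
  · refine ⟨?_, w, ?_⟩
    · simpa [hκ0] using hG
    · simp [hκ0, h0]
  · exact (C.step_seg_iff ((hκ i _).1 rfl).1).2 rfl
  · have hi := (hκ i _).1 rfl
    rcases Nat.lt_or_eq_of_le (Nat.succ_le_of_lt hi.2) with h | h
    · have : κ (i + 1) = κ i := (hκ _ _).2 ⟨by omega, h⟩
      left
      simp only [this, true_and, Prod.mk.injEq, decide_eq_false_iff_not]
      omega
    · have : κ (i + 1) = κ i + 1 := by
        rw [show i + 1 = a (κ i + 1) from h, hκa]
      right
      simp only [this, Nat.succ_eq_add_one] at h ⊢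
      refine ⟨?_, by simp, by simpa using h, w, ?_⟩
      · rw [h, hblock]
      · rw [h]
        exact C.seg_self _ _ _ _
  · show decide (a N = a (κ (a N))) = true
    simp [hκa]

theorem exists_factors_of_toNBA_accepts (C : WordCongruence α)
    {G : C.Carrier → C.Carrier → Prop} {w : ℕ → α} (h : (C.toNBA G).Accepts w) :
    ∃ s e, G s e ∧ C.Factors w s e := by
  obtain ⟨r, ⟨hG, u₀, hu₀⟩, hδ, hacc⟩ := h
  have he : ∀ i, (r i).2.1 = (r 0).2.1 := by
    intro i
    induction i with
    | zero => rfl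
    | succ i ih => exact (hδ i).1.trans ih
  have hreset : ∀ i, i ≠ 0 → (r i).2.2.2 = true →
      (r i).1 = (r 0).2.1 ∧ (r i).2.2.1 = C.seg w i i := by
    intro i hi hr
    obtain ⟨i, rfl⟩ := Nat.exists_eq_succ_of_ne_zero hi
    obtain ⟨-, m, -, ⟨-, h⟩ | ⟨-, h₁, -, u, h₂⟩⟩ := hδ i
    · have hr' := hr
      simp only [Nat.succ_eq_add_one, h] at hr'
      exact absurd hr' (by simp)
    · exact ⟨h₁.trans (he i), h₂.trans (C.seg_self _ _ _ _)⟩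
  have hrun : ∀ i, (r i).2.2.1 = C.seg w i i → ∀ j, i ≤ j →
      (∀ l, i < l → l ≤ j → (r l).2.2.2 ≠ true) →
      (r j).1 = (r i).1 ∧ (r j).2.2.1 = C.seg w i j := by
    intro i hi j hij
    induction j, hij using Nat.le_induction with
    | base => exact fun _ => ⟨rfl, hi⟩
    | succ j hij ih =>
      intro hl
      obtain ⟨h₁, h₂⟩ := ih fun l hl₁ hl₂ => hl l hl₁ (by omega)
      obtain ⟨-, m, hm, ⟨h₃, h₄⟩ | ⟨-, -, h₃, -⟩⟩ := hδ j
      · rw [h₂, C.step_seg_iff hij] at hm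
        exact ⟨h₃.trans h₁, by rw [h₄, hm]⟩
      · exact absurd h₃ (hl (j + 1) (by omega) le_rfl)
  have hnext : ∀ i, ∃ j, i < j ∧ (r j).2.2.2 = true ∧
      ((r i).2.2.1 = C.seg w i i → C.seg w i j = (r i).1) := by
    intro i
    have hex : ∃ j, i < j ∧ (r j).2.2.2 = true := by
      obtain ⟨j, hj, hj'⟩ := hacc (i + 1)
      exact ⟨j, hj, hj'⟩
    classical
    obtain ⟨h₁, h₂⟩ := Nat.find_spec hex
    refine ⟨Nat.find hex, h₁, h₂, fun hi => ?_⟩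
    have hmin : ∀ l, i < l → l < Nat.find hex → (r l).2.2.2 ≠ true := fun l hl hl' hr =>
      Nat.find_min hex hl' ⟨hl, hr⟩
    obtain ⟨j, hj⟩ := Nat.exists_eq_succ_of_ne_zero (show Nat.find hex ≠ 0 by omega)
    rw [hj] at h₁ h₂ hmin ⊢
    have hij : i ≤ j := Nat.lt_succ_iff.1 h₁
    obtain ⟨h₃, h₄⟩ := hrun i hi j hij fun l hl hl' => hmin l hl (Nat.lt_succ_of_le hl')
    obtain ⟨-, m, hm, ⟨-, h⟩ | ⟨h, -⟩⟩ := hδ j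
    · simp only [Nat.succ_eq_add_one, h] at h₂
      exact absurd h₂ (by simp)
    · rw [h₄, C.step_seg_iff hij] at hm
      exact hm.symm.trans (h.trans h₃)
  choose nx hlt hflag hseg using hnext
  set a : ℕ → ℕ := fun k => nx^[k] 0
  have hasucc : ∀ k, a (k + 1) = nx (a k) := fun k => Function.iterate_succ_apply' _ _ _
  have ha : StrictMono a := strictMono_nat_of_lt_succ fun k => by
    rw [hasucc]
    exact hlt _
  have hr : ∀ k, (r (a (k + 1))).1 = (r 0).2.1 ∧
      (r (a (k + 1))).2.2.1 = C.seg w (a (k + 1)) (a (k + 1)) := by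
    intro k
    have hpos : 0 < a (k + 1) := (Nat.zero_le _).trans_lt (ha (Nat.lt_succ_self k))
    exact hreset _ hpos.ne' (by rw [hasucc]; exact hflag _)
  refine ⟨(r 0).1, (r 0).2.1, hG, a, ha, rfl, ?_, fun k => ?_⟩
  · exact hseg 0 (hu₀.trans (C.seg_self _ _ _ _))
  · rw [hasucc (k + 1), hseg _ (hr k).2, (hr k).1]

end WordCongruence

theorem Recognizable.exists_nba {α X : Type} {f : (ℕ → α) → X} (hf : Recognizable f)
    (P : Set X) : ∃ B : NBA α, ∀ w, B.Accepts w ↔ f w ∈ P := by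
  obtain ⟨C, hC⟩ := hf
  refine ⟨C.toNBA fun s e => ∃ w, C.Factors w s e ∧ f w ∈ P, fun w => ⟨fun h => ?_, fun h => ?_⟩⟩
  · obtain ⟨s, e, ⟨w', hw', hP⟩, hw⟩ := C.exists_factors_of_toNBA_accepts h
    rwa [hC.eq_of_factors hw hw']
  · obtain ⟨s, e, hw⟩ := C.exists_factors w
    exact C.toNBA_accepts_of_factors ⟨w, hw, h⟩ hw

namespace Kripke

/-- The automaton that guesses `k` runs of `K` generating the input and simulates `B` on the
word of states obtained by translating the guessed state tuples through `ext`. -/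
def productNBA {k : ℕ} {α : Type} (K : Kripke AP) (B : NBA α) (ext : (Fin k → K.S) → α) :
    NBA ((AP × Fin k) → unitInterval) where
  Q := B.Q × (Fin k → K.S)
  finQ := by
    have := K.finS
    have := B.finQ
    exact Fintype.ofFinite _
  init := {q | q.1 ∈ B.init ∧ ∀ i, q.2 i ∈ K.init}
  δ q x := {q' | q'.1 ∈ B.δ q.1 (ext q.2) ∧ (∀ i, K.tr (q.2 i) (q'.2 i)) ∧
    ∀ p i, x (p, i) = K.L (q.2 i) p}
  acc := {q | q.1 ∈ B.acc}

theorem productNBA_accepts_iff {k : ℕ} {α : Type} (K : Kripke AP) (B : NBA α)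
    (ext : (Fin k → K.S) → α) (w : ℕ → (AP × Fin k) → unitInterval) :
    (K.productNBA B ext).Accepts w ↔ ∃ v : ℕ → Fin k → K.S, (∀ i, v 0 i ∈ K.init) ∧
      (∀ n i, K.tr (v n i) (v (n + 1) i)) ∧ (∀ n p i, w n (p, i) = K.L (v n i) p) ∧
      B.Accepts fun n => ext (v n) := by
  constructor
  · rintro ⟨r, ⟨h₁, h₂⟩, hδ, hacc⟩
    exact ⟨fun n => (r n).2, h₂, fun n => (hδ n).2.1, fun n => (hδ n).2.2, fun n => (r n).1, h₁,
      fun n => (hδ n).1, hacc⟩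
  · rintro ⟨v, h₁, h₂, h₃, r, hr, hδ, hacc⟩
    exact ⟨fun n => (r n, v n), ⟨hr, h₁⟩, fun n => ⟨hδ n, h₂ n, h₃ n⟩, hacc⟩

end Kripke

/-- Over any alphabet, some automaton accepts every word and some automaton accepts none. -/
theorem exists_nba_const (α : Type) (p : Prop) : ∃ A : NBA α, ∀ w, A.Accepts w ↔ p :=
  ⟨{ Q := Unit, init := {_q | p}, δ := fun _ _ => Set.univ, acc := Set.univ },
    fun _ => ⟨fun ⟨_, h, _⟩ => h, fun h => ⟨fun _ => (), h, fun _ => trivial,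
      fun N => ⟨N, le_rfl, trivial⟩⟩⟩⟩

/-- For every HyperLTL_prop formula `ψ` with free variables among
`π₁, …, π_k`, every weighted Kripke structure `K` and every `P ⊆ [0,1]`, there is an NBA
over the alphabet `W^{AP_{≤k}}` accepting exactly the encoded traces `t_Π` of assignments
`Π` of the variables to traces of `K` such that `⟦ψ⟧_Π^{𝕋(K)} ∈ P`. -/
theorem stmt_3 {AP Var : Type} [DecidableEq Var] {S : PropSig}
    (k : ℕ) (vs : Fin k → Var) (hinj : Function.Injective vs)
    (ψ : PropForm AP Var S) (hfree : freeVars ψ ⊆ Set.range vs)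
    (K : Kripke AP) (P : Set ℝ) :
    ∃ A : NBA ((AP × Fin k) → unitInterval),
      ∀ w : ℕ → ((AP × Fin k) → unitInterval),
        A.Accepts w ↔
          ∃ ts : Fin k → Trace AP,
            (∀ i, ts i ∈ K.Traces) ∧ w = encode ts ∧
            ∀ ρ : Var → Trace AP, (∀ i, ρ (vs i) = ts i) → sem ψ ρ K.Traces ∈ P := by
  rcases isEmpty_or_nonempty K.S with hS | ⟨⟨s₀⟩⟩
  · have hT : ∀ t, t ∉ K.Traces := fun t ⟨s, _⟩ => hS.elim (s 0)
    cases k with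
    | zero =>
      obtain ⟨A, hA⟩ := exists_nba_const ((AP × Fin 0) → unitInterval)
        (∀ ρ : Var → Trace AP, sem ψ ρ K.Traces ∈ P)
      refine ⟨A, fun w => (hA w).trans ⟨fun h => ?_, ?_⟩⟩
      · exact ⟨fun i => i.elim0, fun i => i.elim0, funext fun n => funext fun q => q.2.elim0,
          fun ρ _ => h ρ⟩
      · rintro ⟨ts, -, -, h⟩ ρ
        exact h ρ fun i => i.elim0
    | succ k =>
      obtain ⟨A, hA⟩ := exists_nba_const ((AP × Fin (k + 1)) → unitInterval) False
      exact ⟨A, fun w => (hA w).trans ⟨False.elim, fun ⟨ts, h, _⟩ => hT _ (h 0)⟩⟩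
  · obtain ⟨B, hB⟩ := (K.recognizable_sem ψ).exists_nba P
    set ext : (Fin k → K.S) → Var → K.S := fun v => Function.extend vs v fun _ => s₀
    have hval : ∀ (v : ℕ → Fin k → K.S) (ρ : Var → Trace AP),
        (∀ i, ρ (vs i) = fun n => K.L (v n i)) →
        sem ψ ρ K.Traces = sem ψ (K.assignment fun n => ext (v n)) K.Traces := by
      refine fun v ρ h => sem_congr ψ _ fun π hπ => ?_
      obtain ⟨i, rfl⟩ := hfree hπ
      rw [h i]
      funext n
      simp only [Kripke.assignment, ext, hinj.extend_apply]
    refine ⟨K.productNBA B ext, fun w => ?_⟩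
    rw [K.productNBA_accepts_iff]
    constructor
    · rintro ⟨v, hinit, htr, hw, hacc⟩
      refine ⟨fun i n => K.L (v n i), fun i => K.mem_traces_iff.2
        ⟨fun n => v n i, hinit i, fun n => htr n i, rfl⟩,
        funext fun n => funext fun q => hw n q.1 q.2, fun ρ hρ => ?_⟩
      rw [hval v ρ hρ]
      exact (hB _).1 hacc
    · rintro ⟨ts, hts, rfl, hP⟩
      choose s hinit htr hs using fun i => K.mem_traces_iff.1 (hts i)
      refine ⟨fun n i => s i n, hinit, fun n i => htr i n, fun n p i => ?_, (hB _).2 ?_⟩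
      · simp only [encode, hs]
      · refine hP _ fun i => ?_
        funext n
        simp only [Kripke.assignment, ext, hinj.extend_apply, hs]

end
end

section
/- For every formula ψ of the positive Boolean closure B⁺(HyperLTL), there exists a formula ψ* in prenex form (a sequence of quantifiers followed by a quantifier-free formula) that is semantically equivalent to ψ (i.e. ⟦ψ⟧_Π^T = ⟦ψ*⟧_Π^T for all trace assignments Π and nonempty sets T of Boolean traces), contains the same number of existential quantifiers and the same number of universal quantifiers as ψ, and has alternation depth α(ψ*) ≤ α(ψ) + 1. -/
open Set

noncomputable section

/-- Quantifier-free LTL formulas (over trace variables). -/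
inductive LTLQF (AP Var : Type) : Type where
  | atom : AP → Var → LTLQF AP Var
  | neg : LTLQF AP Var → LTLQF AP Var
  | or : LTLQF AP Var → LTLQF AP Var → LTLQF AP Var
  | next : LTLQF AP Var → LTLQF AP Var
  | untl : LTLQF AP Var → LTLQF AP Var → LTLQF AP Var

/-- The positive Boolean closure `B⁺(HyperLTL)`:
`ψ ::= ∃π ψ | ∀π ψ | ψ ∨ ψ | ψ ∧ ψ | φ` with `φ` a quantifier-free LTL formula. -/
inductive BForm (AP Var : Type) : Type where
  | qf : LTLQF AP Var → BForm AP Var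
  | or : BForm AP Var → BForm AP Var → BForm AP Var
  | and : BForm AP Var → BForm AP Var → BForm AP Var
  | ex : Var → BForm AP Var → BForm AP Var
  | all : Var → BForm AP Var → BForm AP Var

variable {AP Var : Type}

/-- Satisfaction value of quantifier-free LTL formulas. -/
def lsem : LTLQF AP Var → (Var → Trace AP) → Set (Trace AP) → ℝ
  | .atom p π, ρ, _ => (ρ π 0 p : ℝ)
  | .neg φ, ρ, T => 1 - lsem φ ρ T
  | .or φ₁ φ₂, ρ, T => max (lsem φ₁ ρ T) (lsem φ₂ ρ T)
  | .next φ, ρ, T => lsem φ (shiftA ρ 1) T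
  | .untl φ₁ φ₂, ρ, T =>
      ⨆ i : ℕ, min (lsem φ₂ (shiftA ρ i) T)
        (prefMin (fun j => lsem φ₁ (shiftA ρ j) T) i)

/-- Satisfaction value `⟦ψ⟧_Π^T` of `B⁺(HyperLTL)` formulas. -/
def bsem [DecidableEq Var] : BForm AP Var → (Var → Trace AP) → Set (Trace AP) → ℝ
  | .qf φ, ρ, T => lsem φ ρ T
  | .or ψ₁ ψ₂, ρ, T => max (bsem ψ₁ ρ T) (bsem ψ₂ ρ T)
  | .and ψ₁ ψ₂, ρ, T => min (bsem ψ₁ ρ T) (bsem ψ₂ ρ T)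
  | .ex π ψ, ρ, T => sSup ((fun t => bsem ψ (Function.update ρ π t) T) '' T)
  | .all π ψ, ρ, T => sInf ((fun t => bsem ψ (Function.update ρ π t) T) '' T)

/-- Prenex form: a prefix of quantifiers followed by a quantifier-free formula. -/
def IsPrenex : BForm AP Var → Prop
  | .qf _ => True
  | .or _ _ => False
  | .and _ _ => False
  | .ex _ ψ => IsPrenex ψ
  | .all _ ψ => IsPrenex ψ

/-- Number of existential quantifiers. -/
def numEx : BForm AP Var → ℕ
  | .qf _ => 0
  | .or ψ₁ ψ₂ => numEx ψ₁ + numEx ψ₂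
  | .and ψ₁ ψ₂ => numEx ψ₁ + numEx ψ₂
  | .ex _ ψ => numEx ψ + 1
  | .all _ ψ => numEx ψ

/-- Number of universal quantifiers. -/
def numAll : BForm AP Var → ℕ
  | .qf _ => 0
  | .or ψ₁ ψ₂ => numAll ψ₁ + numAll ψ₂
  | .and ψ₁ ψ₂ => numAll ψ₁ + numAll ψ₂
  | .ex _ ψ => numAll ψ
  | .all _ ψ => numAll ψ + 1

/-- Maximal number of quantifier alternations along a branch, assuming the last quantifier
seen above was existential (`q = true`) or universal (`q = false`). -/
def altFrom : Bool → BForm AP Var → ℕ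
  | _, .qf _ => 0
  | q, .or ψ₁ ψ₂ => max (altFrom q ψ₁) (altFrom q ψ₂)
  | q, .and ψ₁ ψ₂ => max (altFrom q ψ₁) (altFrom q ψ₂)
  | q, .ex _ ψ => if q then altFrom true ψ else altFrom true ψ + 1
  | q, .all _ ψ => if q then altFrom false ψ + 1 else altFrom false ψ

/-- The alternation depth `α(ψ)`: the maximal number of quantifier alternations (from
existential to universal or vice versa) along a branch of the syntax tree of `ψ`. -/
def altDepth : BForm AP Var → ℕ
  | .qf _ => 0
  | .or ψ₁ ψ₂ => max (altDepth ψ₁) (altDepth ψ₂)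
  | .and ψ₁ ψ₂ => max (altDepth ψ₁) (altDepth ψ₂)
  | .ex _ ψ => altFrom true ψ
  | .all _ ψ => altFrom false ψ

/-! ### Quantifier-free formulas -/

/-- Renaming of the trace variables of a quantifier-free formula. -/
def LTLQF.rename (σ : Var → Var) : LTLQF AP Var → LTLQF AP Var
  | .atom p π => .atom p (σ π)
  | .neg φ => .neg (φ.rename σ)
  | .or φ₁ φ₂ => .or (φ₁.rename σ) (φ₂.rename σ)
  | .next φ => .next (φ.rename σ)
  | .untl φ₁ φ₂ => .untl (φ₁.rename σ) (φ₂.rename σ)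

theorem lsem_rename (σ : Var → Var) (φ : LTLQF AP Var) (ρ : Var → Trace AP)
    (T : Set (Trace AP)) : lsem (φ.rename σ) ρ T = lsem φ (ρ ∘ σ) T := by
  have hshift (ρ : Var → Trace AP) (i : ℕ) : shiftA ρ i ∘ σ = shiftA (ρ ∘ σ) i := rfl
  induction φ generalizing ρ with
  | atom p π => rfl
  | neg φ ih => simp only [LTLQF.rename, lsem, ih]
  | or φ₁ φ₂ ih₁ ih₂ => simp only [LTLQF.rename, lsem, ih₁, ih₂]
  | next φ ih => simp only [LTLQF.rename, lsem, ih, hshift]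
  | untl φ₁ φ₂ ih₁ ih₂ => simp only [LTLQF.rename, lsem, ih₁, ih₂, hshift]

theorem prefMin_mem_Icc {g : ℕ → ℝ} (hg : ∀ j, g j ∈ Icc (0 : ℝ) 1) (i : ℕ) :
    prefMin g i ∈ Icc (0 : ℝ) 1 := by
  induction i with
  | zero => simp [prefMin]
  | succ i ih => exact ⟨le_min ih.1 (hg i).1, (min_le_left _ _).trans ih.2⟩

theorem lsem_mem_Icc (φ : LTLQF AP Var) (ρ : Var → Trace AP) (T : Set (Trace AP)) :
    lsem φ ρ T ∈ Icc (0 : ℝ) 1 := by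
  induction φ generalizing ρ with
  | atom p π => exact (ρ π 0 p).2
  | neg φ ih =>
    have h := ih ρ
    simp only [lsem, mem_Icc] at h ⊢
    constructor <;> linarith
  | or φ₁ φ₂ ih₁ ih₂ => exact ⟨(ih₁ ρ).1.trans (le_max_left _ _), max_le (ih₁ ρ).2 (ih₂ ρ).2⟩
  | next φ ih => exact ih _
  | untl φ₁ φ₂ ih₁ ih₂ =>
    refine ⟨Real.iSup_nonneg fun i => le_min (ih₂ _).1 ?_,
      ciSup_le fun i => (min_le_left _ _).trans (ih₂ _).2⟩
    exact (prefMin_mem_Icc (fun j => ih₁ _) i).1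

/-- The value of a quantifier-free formula only depends on finitely many variables. -/
theorem lsem_finite_support [DecidableEq Var] (φ : LTLQF AP Var) :
    ∃ S : Finset Var, ∀ (ρ ρ' : Var → Trace AP) (T : Set (Trace AP)),
      (∀ x ∈ S, ρ x = ρ' x) → lsem φ ρ T = lsem φ ρ' T := by
  have hshift {S : Finset Var} {ρ ρ' : Var → Trace AP} (h : ∀ x ∈ S, ρ x = ρ' x) (i : ℕ) :
      ∀ x ∈ S, shiftA ρ i x = shiftA ρ' i x :=
    fun x hx => by funext n; simp only [shiftA, h x hx]
  induction φ with
  | atom p π => exact ⟨{π}, fun ρ ρ' T h => by simp [lsem, h π (by simp)]⟩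
  | neg φ ih =>
    obtain ⟨S, hS⟩ := ih
    exact ⟨S, fun ρ ρ' T h => by simp only [lsem, hS ρ ρ' T h]⟩
  | or φ₁ φ₂ ih₁ ih₂ =>
    obtain ⟨S₁, h₁⟩ := ih₁
    obtain ⟨S₂, h₂⟩ := ih₂
    refine ⟨S₁ ∪ S₂, fun ρ ρ' T h => ?_⟩
    rw [Finset.forall_mem_union] at h
    simp only [lsem, h₁ ρ ρ' T h.1, h₂ ρ ρ' T h.2]
  | next φ ih =>
    obtain ⟨S, hS⟩ := ih
    exact ⟨S, fun ρ ρ' T h => hS _ _ T (hshift h 1)⟩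
  | untl φ₁ φ₂ ih₁ ih₂ =>
    obtain ⟨S₁, h₁⟩ := ih₁
    obtain ⟨S₂, h₂⟩ := ih₂
    refine ⟨S₁ ∪ S₂, fun ρ ρ' T h => ?_⟩
    rw [Finset.forall_mem_union] at h
    simp only [lsem, h₁ _ _ T (hshift h.1 _), h₂ _ _ T (hshift h.2 _)]

/-! ### Quantifiers and binary connectives, uniformly in their polarity -/

/-- The existential (`true`) or universal (`false`) quantification of a formula. -/
def BForm.quant (b : Bool) (π : Var) (ψ : BForm AP Var) : BForm AP Var :=
  if b then .ex π ψ else .all π ψ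

/-- Supremum (`true`) or infimum (`false`). -/
def quantVal (b : Bool) (A : Set ℝ) : ℝ := if b then sSup A else sInf A

/-- Maximum (`true`) or minimum (`false`). -/
def connVal (c : Bool) (x y : ℝ) : ℝ := if c then max x y else min x y

theorem connVal_comm (c : Bool) (x y : ℝ) : connVal c x y = connVal c y x := by
  cases c
  · exact min_comm x y
  · exact max_comm x y

theorem connVal_quantVal (c b : Bool) {A : Set ℝ} (hne : A.Nonempty) (hA : A ⊆ Icc 0 1) (y : ℝ) :
    connVal c (quantVal b A) y = quantVal b ((fun x => connVal c x y) '' A) := by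
  have hmono : Monotone fun x => connVal c x y := by
    intro x x' h
    cases c
    · exact min_le_min_right y h
    · exact max_le_max_right y h
  have hcont : Continuous fun x => connVal c x y := by
    cases c
    · exact continuous_id.min continuous_const
    · exact continuous_id.max continuous_const
  cases b
  · exact hmono.map_csInf_of_continuousAt hcont.continuousAt hne (bddBelow_Icc.mono hA)
  · exact hmono.map_csSup_of_continuousAt hcont.continuousAt hne (bddAbove_Icc.mono hA)

theorem exists_lsem_eq_connVal (c : Bool) (φ₁ φ₂ : LTLQF AP Var) :
    ∃ φ : LTLQF AP Var, ∀ (ρ : Var → Trace AP) (T : Set (Trace AP)),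
      lsem φ ρ T = connVal c (lsem φ₁ ρ T) (lsem φ₂ ρ T) := by
  cases c
  · refine ⟨.neg (.or (.neg φ₁) (.neg φ₂)), fun ρ T => ?_⟩
    simp only [lsem, connVal, Bool.false_eq_true, if_false]
    rw [max_sub_sub_left, sub_sub_cancel]
  · exact ⟨.or φ₁ φ₂, fun ρ T => rfl⟩

section Quant

variable (b q : Bool) (π : Var) (ψ : BForm AP Var)

@[simp] theorem isPrenex_quant : IsPrenex (.quant b π ψ) ↔ IsPrenex ψ := by cases b <;> rfl

@[simp] theorem numEx_quant : numEx (.quant b π ψ) = numEx ψ + b.toNat := by cases b <;> rfl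

@[simp] theorem numAll_quant : numAll (.quant b π ψ) = numAll ψ + (!b).toNat := by
  cases b <;> rfl

@[simp] theorem altFrom_quant :
    altFrom q (.quant b π ψ) = altFrom b ψ + if q = b then 0 else 1 := by
  cases b <;> cases q <;> rfl

theorem bsem_quant [DecidableEq Var] (ρ : Var → Trace AP) (T : Set (Trace AP)) :
    bsem (.quant b π ψ) ρ T =
      quantVal b ((fun t => bsem ψ (Function.update ρ π t) T) '' T) := by
  cases b <;> rfl

end Quant

theorem IsPrenex.eq_qf_or_quant {ψ : BForm AP Var} (h : IsPrenex ψ) :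
    (∃ φ, ψ = .qf φ) ∨ ∃ b π ψ', ψ = .quant b π ψ' := by
  cases ψ with
  | qf φ => exact .inl ⟨φ, rfl⟩
  | or ψ₁ ψ₂ => exact h.elim
  | and ψ₁ ψ₂ => exact h.elim
  | ex π ψ => exact .inr ⟨true, π, ψ, rfl⟩
  | all π ψ => exact .inr ⟨false, π, ψ, rfl⟩

/-! ### Basic properties of the semantics -/

theorem bsem_mem_Icc [DecidableEq Var] (ψ : BForm AP Var) (ρ : Var → Trace AP)
    {T : Set (Trace AP)} (hT : T.Nonempty) : bsem ψ ρ T ∈ Icc (0 : ℝ) 1 := by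
  induction ψ generalizing ρ with
  | qf φ => exact lsem_mem_Icc φ ρ T
  | or ψ₁ ψ₂ ih₁ ih₂ => exact ⟨(ih₁ ρ).1.trans (le_max_left _ _), max_le (ih₁ ρ).2 (ih₂ ρ).2⟩
  | and ψ₁ ψ₂ ih₁ ih₂ => exact ⟨le_min (ih₁ ρ).1 (ih₂ ρ).1, (min_le_left _ _).trans (ih₁ ρ).2⟩
  | ex π ψ ih =>
    constructor
    · exact Real.sSup_nonneg (forall_mem_image.2 fun t _ => (ih _).1)
    · exact csSup_le (hT.image _) (forall_mem_image.2 fun t _ => (ih _).2)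
  | all π ψ ih =>
    obtain ⟨t, ht⟩ := hT
    constructor
    · exact Real.sInf_nonneg (forall_mem_image.2 fun t _ => (ih _).1)
    · exact (csInf_le ⟨0, forall_mem_image.2 fun t _ => (ih _).1⟩
        (mem_image_of_mem _ ht)).trans (ih _).2

/-- The value of a formula only depends on finitely many variables. -/
theorem bsem_finite_support [DecidableEq Var] (ψ : BForm AP Var) :
    ∃ S : Finset Var, ∀ (ρ ρ' : Var → Trace AP) (T : Set (Trace AP)),
      (∀ x ∈ S, ρ x = ρ' x) → bsem ψ ρ T = bsem ψ ρ' T := by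
  have hupd {S : Finset Var} {ρ ρ' : Var → Trace AP} (h : ∀ x ∈ S, ρ x = ρ' x) (π : Var)
      (t : Trace AP) : ∀ x ∈ S, Function.update ρ π t x = Function.update ρ' π t x :=
    fun x hx => by simp only [Function.update_apply, h x hx]
  induction ψ with
  | qf φ => exact lsem_finite_support φ
  | or ψ₁ ψ₂ ih₁ ih₂ | and ψ₁ ψ₂ ih₁ ih₂ =>
    obtain ⟨S₁, h₁⟩ := ih₁
    obtain ⟨S₂, h₂⟩ := ih₂
    refine ⟨S₁ ∪ S₂, fun ρ ρ' T h => ?_⟩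
    rw [Finset.forall_mem_union] at h
    simp only [bsem, h₁ ρ ρ' T h.1, h₂ ρ ρ' T h.2]
  | ex π ψ ih | all π ψ ih =>
    obtain ⟨S, hS⟩ := ih
    exact ⟨S, fun ρ ρ' T h => by simp only [bsem, hS _ _ T (hupd h π _)]⟩

/-! ### Merging two prenex formulas -/

/-- `χ` is a prenex form of the disjunction (`c = true`) or conjunction (`c = false`) of `ψ₁`,
with variables renamed by `σ₁`, and `ψ₂`, with variables renamed by `σ₂`. -/
structure IsMerge [DecidableEq Var] (c q : Bool) (ψ₁ : BForm AP Var) (σ₁ : Var → Var)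
    (ψ₂ : BForm AP Var) (σ₂ : Var → Var) (χ : BForm AP Var) : Prop where
  prenex : IsPrenex χ
  sem : ∀ (ρ : Var → Trace AP) (T : Set (Trace AP)), T.Nonempty →
    bsem χ ρ T = connVal c (bsem ψ₁ (ρ ∘ σ₁) T) (bsem ψ₂ (ρ ∘ σ₂) T)
  ex : numEx χ = numEx ψ₁ + numEx ψ₂
  all : numAll χ = numAll ψ₁ + numAll ψ₂
  alt : altFrom q χ ≤ max (altFrom q ψ₁) (altFrom q ψ₂)

theorem IsMerge.symm [DecidableEq Var] {c q : Bool} {ψ₁ ψ₂ χ : BForm AP Var} {σ₁ σ₂ : Var → Var}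
    (h : IsMerge c q ψ₁ σ₁ ψ₂ σ₂ χ) : IsMerge c q ψ₂ σ₂ ψ₁ σ₁ χ where
  prenex := h.prenex
  sem ρ T hT := by rw [h.sem ρ T hT, connVal_comm]
  ex := by rw [h.ex, add_comm]
  all := by rw [h.all, add_comm]
  alt := by rw [max_comm]; exact h.alt

/-- The outermost quantifier of the first formula may be pulled out of a merge. -/
theorem IsMerge.exists_quant [DecidableEq Var] [Infinite Var] {c q b : Bool} {π : Var}
    {ψ ψ₂ : BForm AP Var} {σ₁ σ₂ : Var → Var}
    (h : ∀ σ, ∃ χ, IsMerge c b ψ σ ψ₂ σ₂ χ)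
    (hq : altFrom b ψ₂ + (if q = b then 0 else 1) ≤
      max (altFrom q (.quant b π ψ)) (altFrom q ψ₂)) :
    ∃ χ, IsMerge c q (.quant b π ψ) σ₁ ψ₂ σ₂ χ := by
  obtain ⟨S₁, hS₁⟩ := bsem_finite_support ψ
  obtain ⟨S₂, hS₂⟩ := bsem_finite_support ψ₂
  obtain ⟨v, hv⟩ := Infinite.exists_notMem_finset (S₁.image σ₁ ∪ S₂.image σ₂)
  simp only [Finset.mem_union, Finset.mem_image, not_or, not_exists, not_and] at hv
  obtain ⟨χ, hχ⟩ := h (Function.update σ₁ π v)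
  refine ⟨.quant b v χ, ⟨by simpa using hχ.prenex, fun ρ T hT => ?_, ?_, ?_, ?_⟩⟩
  · have h₁ (t : Trace AP) : bsem ψ (Function.update ρ v t ∘ Function.update σ₁ π v) T =
        bsem ψ (Function.update (ρ ∘ σ₁) π t) T := by
      refine hS₁ _ _ T fun x hx => ?_
      by_cases hxπ : x = π
      · subst hxπ; simp
      · simp [hxπ, hv.1 x hx]
    have h₂ (t : Trace AP) : bsem ψ₂ (Function.update ρ v t ∘ σ₂) T = bsem ψ₂ (ρ ∘ σ₂) T :=
      hS₂ _ _ T fun x hx => by simp [hv.2 x hx]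
    rw [bsem_quant, bsem_quant, connVal_quantVal c b (hT.image _)
      (image_subset_iff.2 fun t _ => bsem_mem_Icc ψ _ hT), image_image]
    simp only [hχ.sem _ T hT, h₁, h₂]
  · simp only [numEx_quant, hχ.ex]; omega
  · simp only [numAll_quant, hχ.all]; omega
  · have := hχ.alt
    simp only [altFrom_quant] at hq ⊢
    omega

theorem exists_isMerge [DecidableEq Var] [Infinite Var] (c q : Bool) (ψ₁ ψ₂ : BForm AP Var)
    (σ₁ σ₂ : Var → Var) (h₁ : IsPrenex ψ₁) (h₂ : IsPrenex ψ₂) :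
    ∃ χ, IsMerge c q ψ₁ σ₁ ψ₂ σ₂ χ := by
  induction hn : numEx ψ₁ + numAll ψ₁ + (numEx ψ₂ + numAll ψ₂)
    generalizing q ψ₁ ψ₂ σ₁ σ₂ with
  | zero =>
    obtain ⟨φ₁, rfl⟩ | ⟨b₁, π₁, ψ₁, rfl⟩ := h₁.eq_qf_or_quant
    · obtain ⟨φ₂, rfl⟩ | ⟨b₂, π₂, ψ₂, rfl⟩ := h₂.eq_qf_or_quant
      · obtain ⟨φ, hφ⟩ := exists_lsem_eq_connVal c (φ₁.rename σ₁) (φ₂.rename σ₂)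
        refine ⟨.qf φ, ⟨trivial, fun ρ T _ => ?_, rfl, rfl, Nat.zero_le _⟩⟩
        simp only [bsem, hφ, lsem_rename]
      · cases b₂ <;> simp at hn
    · cases b₁ <;> simp at hn
  | succ n ih =>
    have left (q b : Bool) (π : Var) (ψ ψ₂ : BForm AP Var) (σ₁ σ₂ : Var → Var)
        (h : IsPrenex (.quant b π ψ)) (h₂ : IsPrenex ψ₂)
        (hn : numEx (.quant b π ψ) + numAll (.quant b π ψ) + (numEx ψ₂ + numAll ψ₂) = n + 1)
        (hq : altFrom b ψ₂ + (if q = b then 0 else 1) ≤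
          max (altFrom q (.quant b π ψ)) (altFrom q ψ₂)) :
        ∃ χ, IsMerge c q (.quant b π ψ) σ₁ ψ₂ σ₂ χ := by
      refine IsMerge.exists_quant (fun σ => ih b ψ ψ₂ σ σ₂ (by simpa using h) h₂ ?_) hq
      cases b <;> simp at hn <;> omega
    obtain ⟨φ₁, rfl⟩ | ⟨b₁, π₁, ψ₁, rfl⟩ := h₁.eq_qf_or_quant
    · obtain ⟨φ₂, rfl⟩ | ⟨b₂, π₂, ψ₂, rfl⟩ := h₂.eq_qf_or_quant
      · simp [numEx, numAll] at hn
      · obtain ⟨χ, hχ⟩ := left q b₂ π₂ ψ₂ (.qf φ₁) σ₂ σ₁ h₂ h₁ (by omega) (by simp [altFrom])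
        exact ⟨χ, hχ.symm⟩
    · obtain ⟨φ₂, rfl⟩ | ⟨b₂, π₂, ψ₂, rfl⟩ := h₂.eq_qf_or_quant
      · exact left q b₁ π₁ ψ₁ (.qf φ₂) σ₁ σ₂ h₁ trivial hn (by simp [altFrom])
      · by_cases hb : q = b₁ ∨ b₁ = b₂
        · refine left q b₁ π₁ ψ₁ _ σ₁ σ₂ h₁ h₂ hn ?_
          obtain rfl | rfl := hb <;> simp
        · obtain rfl : q = b₂ := by
            revert hb
            cases q <;> cases b₁ <;> cases b₂ <;> decide
          obtain ⟨χ, hχ⟩ := left q q π₂ ψ₂ (.quant b₁ π₁ ψ₁) σ₂ σ₁ h₂ h₁ (by omega)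
            (by simp)
          exact ⟨χ, hχ.symm⟩

/-! ### Prenex normal form -/

/-- Relative to a fixed quantifier seen above, prenexing does not increase the alternation depth. -/
theorem exists_prenex_altFrom_le [DecidableEq Var] [Infinite Var] (q : Bool) (ψ : BForm AP Var) :
    ∃ ψ' : BForm AP Var, IsPrenex ψ' ∧
      (∀ (ρ : Var → Trace AP) (T : Set (Trace AP)), T.Nonempty → bsem ψ ρ T = bsem ψ' ρ T) ∧
      numEx ψ' = numEx ψ ∧ numAll ψ' = numAll ψ ∧ altFrom q ψ' ≤ altFrom q ψ := by
  have conn (c q : Bool) {ψ₁ ψ₂ χ₁ χ₂ : BForm AP Var}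
      (h₁ : IsPrenex χ₁ ∧ (∀ (ρ : Var → Trace AP) (T : Set (Trace AP)), T.Nonempty →
        bsem ψ₁ ρ T = bsem χ₁ ρ T) ∧ numEx χ₁ = numEx ψ₁ ∧ numAll χ₁ = numAll ψ₁ ∧
        altFrom q χ₁ ≤ altFrom q ψ₁)
      (h₂ : IsPrenex χ₂ ∧ (∀ (ρ : Var → Trace AP) (T : Set (Trace AP)), T.Nonempty →
        bsem ψ₂ ρ T = bsem χ₂ ρ T) ∧ numEx χ₂ = numEx ψ₂ ∧ numAll χ₂ = numAll ψ₂ ∧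
        altFrom q χ₂ ≤ altFrom q ψ₂) :
      ∃ χ : BForm AP Var, IsPrenex χ ∧
        (∀ (ρ : Var → Trace AP) (T : Set (Trace AP)), T.Nonempty →
          connVal c (bsem ψ₁ ρ T) (bsem ψ₂ ρ T) = bsem χ ρ T) ∧
        numEx χ = numEx ψ₁ + numEx ψ₂ ∧ numAll χ = numAll ψ₁ + numAll ψ₂ ∧
        altFrom q χ ≤ max (altFrom q ψ₁) (altFrom q ψ₂) := by
    obtain ⟨p₁, s₁, e₁, a₁, d₁⟩ := h₁
    obtain ⟨p₂, s₂, e₂, a₂, d₂⟩ := h₂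
    obtain ⟨χ, hχ⟩ := exists_isMerge c q χ₁ χ₂ id id p₁ p₂
    refine ⟨χ, hχ.prenex, fun ρ T hT => ?_, by rw [hχ.ex, e₁, e₂], by rw [hχ.all, a₁, a₂],
      hχ.alt.trans (max_le_max d₁ d₂)⟩
    rw [hχ.sem ρ T hT, s₁ ρ T hT, s₂ ρ T hT, Function.comp_id]
  induction ψ generalizing q with
  | qf φ => exact ⟨.qf φ, trivial, fun _ _ _ => rfl, rfl, rfl, le_rfl⟩
  | or ψ₁ ψ₂ ih₁ ih₂ =>
    obtain ⟨χ₁, h₁⟩ := ih₁ q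
    obtain ⟨χ₂, h₂⟩ := ih₂ q
    exact conn true q h₁ h₂
  | and ψ₁ ψ₂ ih₁ ih₂ =>
    obtain ⟨χ₁, h₁⟩ := ih₁ q
    obtain ⟨χ₂, h₂⟩ := ih₂ q
    exact conn false q h₁ h₂
  | ex π ψ ih =>
    obtain ⟨χ, p, s, e, a, d⟩ := ih true
    refine ⟨.ex π χ, p, fun ρ T hT => by simp only [bsem, s _ T hT], congrArg (· + 1) e, a, ?_⟩
    cases q <;> simpa [altFrom] using d
  | all π ψ ih =>
    obtain ⟨χ, p, s, e, a, d⟩ := ih false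
    refine ⟨.all π χ, p, fun ρ T hT => by simp only [bsem, s _ T hT], e, congrArg (· + 1) a, ?_⟩
    cases q <;> simpa [altFrom] using d

theorem altDepth_le_altFrom (q : Bool) (ψ : BForm AP Var) : altDepth ψ ≤ altFrom q ψ := by
  induction ψ with
  | qf φ => exact le_rfl
  | or ψ₁ ψ₂ ih₁ ih₂ | and ψ₁ ψ₂ ih₁ ih₂ => exact max_le_max ih₁ ih₂
  | ex π ψ | all π ψ => cases q <;> simp [altDepth, altFrom]

theorem altFrom_le_altDepth_add_one (q : Bool) (ψ : BForm AP Var) :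
    altFrom q ψ ≤ altDepth ψ + 1 := by
  induction ψ with
  | qf φ => exact Nat.zero_le _
  | or ψ₁ ψ₂ ih₁ ih₂ | and ψ₁ ψ₂ ih₁ ih₂ => simp only [altFrom, altDepth]; omega
  | ex π ψ | all π ψ => cases q <;> simp [altDepth, altFrom]

/-- Every `B⁺(HyperLTL)` formula `ψ` is equivalent (over nonempty sets of
Boolean traces) to a prenex formula `ψ*` with the same number of existential and universal
quantifiers and alternation depth `α(ψ*) ≤ α(ψ) + 1`. -/
theorem stmt_5 [DecidableEq Var] [Infinite Var] (ψ : BForm AP Var) :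
    ∃ ψ' : BForm AP Var,
      IsPrenex ψ' ∧
      (∀ (ρ : Var → Trace AP) (T : Set (Trace AP)),
        T ⊆ {t | IsBoolTrace t} → T.Nonempty → bsem ψ ρ T = bsem ψ' ρ T) ∧
      numEx ψ' = numEx ψ ∧ numAll ψ' = numAll ψ ∧
      altDepth ψ' ≤ altDepth ψ + 1 := by
  obtain ⟨ψ', hp, hs, he, ha, hd⟩ := exists_prenex_altFrom_le true ψ
  exact ⟨ψ', hp, fun ρ T _ hT => hs ρ T hT, he, ha, (altDepth_le_altFrom true ψ').trans
    (hd.trans (altFrom_le_altDepth_add_one true ψ))⟩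

end
end

section
/- For every k ∈ ℕ, every finite set H of discounting sequences, every finite set W ⊆ [0,1], and every a ∈ (0,1), the set V_{k,H,W} ∩ [a,1] is finite. -/
open Set

noncomputable section

/-- A discounting sequence: strictly decreasing, with values in `[0,1]` and limit `0`. -/
def IsDiscounting (η : ℕ → ℝ) : Prop :=
  StrictAnti η ∧ (∀ i, η i ∈ Set.Icc (0:ℝ) 1) ∧
    Filter.Tendsto η Filter.atTop (nhds 0)

/-- The set
`V_{k,H,W} = {0,1} ∪ W ∪ {w·∏_{ℓ=1}^{k'} η^{(ℓ)}_{i_ℓ} : w ∈ W, k' ≤ k, i_ℓ ∈ ℕ, η^{(ℓ)} ∈ H}`. -/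
def Vset (k : ℕ) (H : Set (ℕ → ℝ)) (W : Set ℝ) : Set ℝ :=
  {0, 1} ∪ W ∪
    {x | ∃ w ∈ W, ∃ k' ≤ k, ∃ idx : Fin k' → ℕ, ∃ e : Fin k' → (ℕ → ℝ),
      (∀ ℓ, e ℓ ∈ H) ∧ x = w * ∏ ℓ : Fin k', e ℓ (idx ℓ)}

/-- A discounting sequence takes only finitely many values above a positive threshold. -/
theorem IsDiscounting.finite_range_inter_Ici {η : ℕ → ℝ} (hη : IsDiscounting η) {a : ℝ}
    (ha : 0 < a) : (Set.range η ∩ Set.Ici a).Finite := by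
  obtain ⟨N, hN⟩ := Filter.eventually_atTop.1 (hη.2.2.eventually_lt_const ha)
  refine ((Set.finite_Iio N).image η).subset ?_
  rintro _ ⟨⟨i, rfl⟩, hi⟩
  refine ⟨i, ?_, rfl⟩
  by_contra h
  exact absurd (hN i (not_lt.1 h)) (not_lt.2 hi)

/-- A finite product of reals in `[0,1]` is at most each of its factors. -/
theorem prod_le_factor_of_mem_Icc {ι : Type*} [Fintype ι] {f : ι → ℝ}
    (hf : ∀ i, f i ∈ Set.Icc (0 : ℝ) 1) (j : ι) : ∏ i, f i ≤ f j := by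
  classical
  rw [← Finset.mul_prod_erase _ _ (Finset.mem_univ j)]
  exact mul_le_of_le_one_right (hf j).1
    (Finset.prod_le_one (fun i _ => (hf i).1) fun i _ => (hf i).2)

/-- For every `a ∈ (0,1)`, the set `V_{k,H,W} ∩ [a,1]` is finite. -/
theorem stmt_8 (k : ℕ) (H : Set (ℕ → ℝ)) (hHfin : H.Finite)
    (hH : ∀ η ∈ H, IsDiscounting η)
    (W : Set ℝ) (hWfin : W.Finite) (hWsub : W ⊆ Set.Icc (0:ℝ) 1)
    (a : ℝ) (ha : a ∈ Set.Ioo (0:ℝ) 1) :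
    (Vset k H W ∩ Set.Icc a 1).Finite := by
  have hS : (⋃ η ∈ H, Set.range η ∩ Set.Ici a).Finite :=
    hHfin.biUnion fun η hη => (hH η hη).finite_range_inter_Ici ha.1
  have hP : (⋃ k' ∈ Set.Iic k, (fun p : ℝ × (Fin k' → ℝ) => p.1 * ∏ ℓ, p.2 ℓ) ''
      (W ×ˢ Set.univ.pi fun _ => ⋃ η ∈ H, Set.range η ∩ Set.Ici a)).Finite :=
    (Set.finite_Iic k).biUnion fun k' _ =>
      (hWfin.prod (Set.Finite.pi fun _ => hS)).image _
  refine (((Set.toFinite {0, 1}).union hWfin).union hP).subset ?_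
  rintro x ⟨hx | ⟨w, hw, k', hk', idx, e, he, rfl⟩, hax, -⟩
  · exact Or.inl hx
  · have hf : ∀ ℓ, e ℓ (idx ℓ) ∈ Set.Icc (0 : ℝ) 1 := fun ℓ => (hH _ (he ℓ)).2.1 _
    have hle : a ≤ ∏ ℓ, e ℓ (idx ℓ) := hax.trans
      (mul_le_of_le_one_left (Finset.prod_nonneg fun ℓ _ => (hf ℓ).1) (hWsub hw).2)
    refine Or.inr (Set.mem_biUnion (Set.mem_Iic.2 hk') ⟨(w, fun ℓ => e ℓ (idx ℓ)), ⟨hw, ?_⟩, rfl⟩)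
    exact fun ℓ _ => Set.mem_biUnion (he ℓ)
      ⟨⟨idx ℓ, rfl⟩, hle.trans (prod_le_factor_of_mem_Icc hf ℓ)⟩

end
end

section
/- For every k ∈ ℕ, every finite set H of discounting sequences, and every finite set W ⊆ [0,1], every non-decreasing sequence (u_n) of real numbers with all values in V_{k,H,W} is eventually constant (stationary). -/
open Set

noncomputable section

/-- The range of an antitone sequence is well-quasi-ordered by `≥`. -/
theorem Antitone.partiallyWellOrderedOn_range {η : ℕ → ℝ} (hη : Antitone η) :
    (range η).PartiallyWellOrderedOn (· ≥ ·) := by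
  have huniv : (univ : Set ℕ).PartiallyWellOrderedOn (· ≤ ·) :=
    partiallyWellOrderedOn_univ_iff.2 wellQuasiOrdered_le
  rw [← image_univ]
  exact huniv.image_of_monotone_on fun _ _ _ _ hij => hη hij

/-- If `W` and `T` consist of nonnegative reals and are well-quasi-ordered by `≥`, then so is the
set of products of an element of `W` with `m` elements of `T`. -/
theorem Set.PartiallyWellOrderedOn.mul_prod {W T : Set ℝ}
    (hW : W.PartiallyWellOrderedOn (· ≥ ·)) (hT : T.PartiallyWellOrderedOn (· ≥ ·))
    (hW0 : ∀ w ∈ W, 0 ≤ w) (hT0 : ∀ t ∈ T, 0 ≤ t) (m : ℕ) :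
    ((fun p : ℝ × (Fin m → ℝ) => p.1 * ∏ i, p.2 i) '' (W ×ˢ univ.pi fun _ => T))
      |>.PartiallyWellOrderedOn (· ≥ ·) := by
  refine (hW.prod (PartiallyWellOrderedOn.pi fun _ => hT)).image_of_monotone_on ?_
  rintro ⟨w, f⟩ ⟨hw, -⟩ ⟨w', f'⟩ ⟨-, hf'⟩ ⟨hww', hff'⟩
  exact mul_le_mul hww'
    (Finset.prod_le_prod (fun i _ => hT0 _ (hf' i (mem_univ i))) fun i _ => hff' i)
    (Finset.prod_nonneg fun i _ => hT0 _ (hf' i (mem_univ i))) (hW0 w hw)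

theorem Vset_partiallyWellOrderedOn (k : ℕ) {H : Set (ℕ → ℝ)} (hHfin : H.Finite)
    (hH : ∀ η ∈ H, IsDiscounting η) {W : Set ℝ} (hWfin : W.Finite)
    (hWsub : W ⊆ Set.Icc (0:ℝ) 1) :
    (Vset k H W).PartiallyWellOrderedOn (· ≥ ·) := by
  have hT : (⋃ η ∈ H, range η).PartiallyWellOrderedOn (· ≥ ·) := by
    have := (Finset.partiallyWellOrderedOn_bUnion hHfin.toFinset (f := range)
      (r := (· ≥ ·))).2 fun η hη =>
        (hH η (hHfin.mem_toFinset.1 hη)).1.antitone.partiallyWellOrderedOn_range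
    simpa only [hHfin.mem_toFinset] using this
  have hT0 : ∀ t ∈ ⋃ η ∈ H, range η, 0 ≤ t := by
    intro t ht
    simp only [mem_iUnion, mem_range] at ht
    obtain ⟨η, hη, i, rfl⟩ := ht
    exact ((hH η hη).2.1 i).1
  refine (((toFinite {0, 1}).union hWfin).partiallyWellOrderedOn).union ?_
  refine ((Finset.partiallyWellOrderedOn_bUnion (Finset.range (k + 1))).2 fun m _ =>
    hWfin.partiallyWellOrderedOn.mul_prod hT (fun w hw => (hWsub hw).1) hT0 m).mono ?_
  rintro x ⟨w, hw, m, hm, idx, e, he, rfl⟩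
  refine mem_biUnion (x := m) (by simpa [Nat.lt_succ_iff] using hm)
    ⟨(w, fun i => e i (idx i)), ⟨hw, fun i _ => ?_⟩, rfl⟩
  exact mem_biUnion (he i) (mem_range_self _)

/-- Every non-decreasing real sequence with values in `V_{k,H,W}` is
eventually constant. -/
theorem stmt_9 (k : ℕ) (H : Set (ℕ → ℝ)) (hHfin : H.Finite)
    (hH : ∀ η ∈ H, IsDiscounting η)
    (W : Set ℝ) (hWfin : W.Finite) (hWsub : W ⊆ Set.Icc (0:ℝ) 1)
    (u : ℕ → ℝ) (hu : Monotone u) (hmem : ∀ n, u n ∈ Vset k H W) :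
    ∃ N, ∀ n, N ≤ n → u n = u N := by
  obtain ⟨g, hg⟩ :=
    (Vset_partiallyWellOrderedOn k hHfin hH hWfin hWsub).exists_monotone_subseq hmem
  refine ⟨g 0, fun n hn => le_antisymm ?_ (hu hn)⟩
  exact (hu (g.strictMono.id_le n)).trans (hg 0 n n.zero_le)

end
end

section
/- For every k ∈ ℕ, every finite set H of discounting sequences, and every finite set W ⊆ [0,1]: (a) for every v ∈ (0,1], the set {x ∈ V_{k,H,W} : x < v} has a greatest element; and (b) for every v ∈ (0,1), the set {x ∈ V_{k,H,W} : x > v} has a least element. -/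
open Set

noncomputable section

/-- Only finitely many values of finitely many discounting sequences are at least `ε > 0`. -/
theorem finite_discounting_values_ge {H : Set (ℕ → ℝ)} (hHfin : H.Finite)
    (hH : ∀ η ∈ H, IsDiscounting η) {ε : ℝ} (hε : 0 < ε) :
    {x : ℝ | ε ≤ x ∧ ∃ η ∈ H, ∃ i, x = η i}.Finite := by
  have hfin : (⋃ η ∈ H, Set.image η {i | ε ≤ η i}).Finite := by
    refine hHfin.biUnion fun η hη => Set.Finite.image _ ?_
    have hev := (hH η hη).2.2.eventually_lt_const hε
    rw [← Nat.cofinite_eq_atTop, Filter.eventually_cofinite] at hev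
    simpa using hev
  refine hfin.subset ?_
  rintro x ⟨hx, η, hη, i, rfl⟩
  exact Set.mem_biUnion hη ⟨i, hx, rfl⟩

/-- The set `Vset k H W` has only finitely many elements above any positive threshold. -/
theorem finite_Vset_ge (k : ℕ) {H : Set (ℕ → ℝ)} (hHfin : H.Finite)
    (hH : ∀ η ∈ H, IsDiscounting η) {W : Set ℝ} (hWfin : W.Finite)
    (hWsub : W ⊆ Set.Icc (0:ℝ) 1) {ε : ℝ} (hε : 0 < ε) :
    {x | x ∈ Vset k H W ∧ ε ≤ x}.Finite := by
  set S : Set ℝ := {x : ℝ | ε ≤ x ∧ ∃ η ∈ H, ∃ i, x = η i}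
  have hSfin : S.Finite := finite_discounting_values_ge hHfin hH hε
  have hprod : (⋃ k' ∈ Set.Iic k, Set.image (fun p : ℝ × (Fin k' → ℝ) => p.1 * ∏ ℓ, p.2 ℓ)
      (W ×ˢ Set.pi Set.univ fun _ => S)).Finite :=
    (Set.finite_Iic k).biUnion fun k' _ =>
      (hWfin.prod (Set.Finite.pi fun _ => hSfin)).image _
  refine (((Set.toFinite ({0, 1} : Set ℝ)).union hWfin).union hprod).subset ?_
  rintro x ⟨hx | ⟨w, hw, k', hk', idx, e, he, rfl⟩, hεx⟩
  · exact Or.inl hx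
  · refine Or.inr (Set.mem_biUnion (Set.mem_Iic.2 hk')
      ⟨(w, fun ℓ => e ℓ (idx ℓ)), ⟨hw, fun ℓ _ => ⟨?_, e ℓ, he ℓ, idx ℓ, rfl⟩⟩, rfl⟩)
    have hmem : ∀ j, e j (idx j) ∈ Set.Icc (0:ℝ) 1 := fun j => (hH _ (he j)).2.1 _
    calc ε ≤ w * ∏ j, e j (idx j) := hεx
      _ ≤ ∏ j, e j (idx j) :=
        mul_le_of_le_one_left (Finset.prod_nonneg fun j _ => (hmem j).1) (hWsub hw).2
      _ = e ℓ (idx ℓ) * ∏ j ∈ Finset.univ.erase ℓ, e j (idx j) :=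
        (Finset.mul_prod_erase _ _ (Finset.mem_univ ℓ)).symm
      _ ≤ e ℓ (idx ℓ) :=
        mul_le_of_le_one_right (hmem ℓ).1
          (Finset.prod_le_one (fun j _ => (hmem j).1) fun j _ => (hmem j).2)

/-- (a) For `v ∈ (0,1]`, the set `{x ∈ V_{k,H,W} : x < v}` has a
greatest element; (b) for `v ∈ (0,1)`, the set `{x ∈ V_{k,H,W} : x > v}` has a least
element. -/
theorem stmt_11 (k : ℕ) (H : Set (ℕ → ℝ)) (hHfin : H.Finite)
    (hH : ∀ η ∈ H, IsDiscounting η)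
    (W : Set ℝ) (hWfin : W.Finite) (hWsub : W ⊆ Set.Icc (0:ℝ) 1) :
    (∀ v ∈ Set.Ioc (0:ℝ) 1, ∃ x, IsGreatest {y | y ∈ Vset k H W ∧ y < v} x) ∧
    (∀ v ∈ Set.Ioo (0:ℝ) 1, ∃ x, IsLeast {y | y ∈ Vset k H W ∧ v < y} x) := by
  constructor
  · rintro v ⟨hv0, -⟩
    by_cases hpos : ∃ y ∈ Vset k H W, 0 < y ∧ y < v
    · obtain ⟨y, hy, hy0, hyv⟩ := hpos
      have hfin : {x | (x ∈ Vset k H W ∧ y ≤ x) ∧ x < v}.Finite :=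
        (finite_Vset_ge k hHfin hH hWfin hWsub hy0).subset fun x hx => hx.1
      obtain ⟨m, hm, hmax⟩ := Set.exists_max_image _ id hfin ⟨y, ⟨hy, le_rfl⟩, hyv⟩
      refine ⟨m, ⟨hm.1.1, hm.2⟩, fun z hz => ?_⟩
      rcases le_total y z with hyz | hzy
      · exact hmax z ⟨⟨hz.1, hyz⟩, hz.2⟩
      · exact hzy.trans hm.1.2
    · push Not at hpos
      refine ⟨0, ⟨Or.inl (Or.inl (by simp)), hv0⟩, fun z hz => ?_⟩
      by_contra! hz0
      exact (hpos z hz.1 hz0).not_gt hz.2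
  · rintro v ⟨hv0, hv1⟩
    have hfin : {y | y ∈ Vset k H W ∧ v < y}.Finite :=
      (finite_Vset_ge k hHfin hH hWfin hWsub hv0).subset fun x hx => ⟨hx.1, hx.2.le⟩
    obtain ⟨m, hm, hmin⟩ :=
      Set.exists_min_image _ id hfin ⟨1, Or.inl (Or.inl (by simp)), hv1⟩
    exact ⟨m, hm, fun z hz => hmin z hz⟩

end
end

section
/- Let η be a discounting sequence, p ∈ AP, and let φ be the quantifier-free HyperLTL_temp formula G(F_η p_π) ∨ F G ¬p_π, evaluated on a single trace t (via the assignment π ↦ t). Then: (a) for every Boolean lasso trace t, ⟦φ⟧(t) > 0; (b) there exists a Boolean trace t with ⟦φ⟧(t) = 0 (for instance the trace in which p holds exactly at the positions k² for k ∈ ℕ). Consequently, the set of Boolean traces t with ⟦φ⟧(t) = 0 is nonempty but contains no lasso. -/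
open Set

noncomputable section

/-- Lassos: eventually periodic traces, i.e. traces of the form `u·v^ω`. -/
def IsLasso {AP : Type} (t : Trace AP) : Prop :=
  ∃ N c : ℕ, 0 < c ∧ ∀ n, N ≤ n → t (n + c) = t n

/-- Quantifier-free HyperLTL_temp formulas, over a set `D` (indexing the discounting
sequences). -/
inductive TQF (AP Var D : Type) : Type where
  | atom : AP → Var → TQF AP Var D
  | neg : TQF AP Var D → TQF AP Var D
  | or : TQF AP Var D → TQF AP Var D → TQF AP Var D
  | next : TQF AP Var D → TQF AP Var D
  | untl : TQF AP Var D → TQF AP Var D → TQF AP Var D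
  | untlD : D → TQF AP Var D → TQF AP Var D → TQF AP Var D

/-- HyperLTL_temp formulas: a prefix of quantifiers over a quantifier-free formula. -/
inductive TForm (AP Var D : Type) : Type where
  | qf : TQF AP Var D → TForm AP Var D
  | ex : Var → TForm AP Var D → TForm AP Var D
  | all : Var → TForm AP Var D → TForm AP Var D

variable {AP Var D : Type}

/-- Satisfaction value of quantifier-free HyperLTL_temp formulas, where `η` interprets the
discounting sequence indices. -/
def tsemQF (η : D → ℕ → ℝ) : TQF AP Var D → (Var → Trace AP) → Set (Trace AP) → ℝ
  | .atom p π, ρ, _ => (ρ π 0 p : ℝ)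
  | .neg φ, ρ, T => 1 - tsemQF η φ ρ T
  | .or φ₁ φ₂, ρ, T => max (tsemQF η φ₁ ρ T) (tsemQF η φ₂ ρ T)
  | .next φ, ρ, T => tsemQF η φ (shiftA ρ 1) T
  | .untl φ₁ φ₂, ρ, T =>
      ⨆ i : ℕ, min (tsemQF η φ₂ (shiftA ρ i) T)
        (prefMin (fun j => tsemQF η φ₁ (shiftA ρ j) T) i)
  | .untlD d φ₁ φ₂, ρ, T =>
      ⨆ i : ℕ, min (η d i * tsemQF η φ₂ (shiftA ρ i) T)
        (prefMin (fun j => η d j * tsemQF η φ₁ (shiftA ρ j) T) i)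


/-- The formula `true = p_π ∨ ¬ p_π`. -/
def ttF (p : AP) : TQF AP Unit Unit := .or (.atom p ()) (.neg (.atom p ()))

/-- The eventually operator `F φ = true U φ`. -/
def Fop (p : AP) (φ : TQF AP Unit Unit) : TQF AP Unit Unit := .untl (ttF p) φ

/-- The globally operator `G φ = ¬ F ¬ φ`. -/
def Gop (p : AP) (φ : TQF AP Unit Unit) : TQF AP Unit Unit := .neg (Fop p (.neg φ))

/-- The discounted eventually operator `F_η φ = true U_η φ`. -/
def FdOp (p : AP) (φ : TQF AP Unit Unit) : TQF AP Unit Unit := .untlD () (ttF p) φ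

/-- The formula `φ = G (F_η p_π) ∨ F G ¬ p_π`. -/
def exForm (p : AP) : TQF AP Unit Unit :=
  .or (Gop p (FdOp p (.atom p ()))) (Fop p (Gop p (.neg (.atom p ()))))

/-- The satisfaction value `⟦φ⟧(t)` of `φ = G (F_η p_π) ∨ F G ¬ p_π` on a single trace. -/
def tval {AP : Type} (η : ℕ → ℝ) (p : AP) (t : Trace AP) : ℝ :=
  tsemQF (fun _ : Unit => η) (exForm p) (fun _ : Unit => t) Set.univ

theorem prefMin_const_one (n : ℕ) : prefMin (fun _ => 1) n = 1 := by
  induction n with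
  | zero => rfl
  | succ n ih => simp [prefMin, ih]

theorem le_prefMin {g : ℕ → ℝ} (hg : Antitone g) (h1 : ∀ i, g i ≤ 1) (n : ℕ) :
    g n ≤ prefMin g n := by
  induction n with
  | zero => exact h1 0
  | succ n ih => exact le_min ((hg n.le_succ).trans ih) (hg n.le_succ)

theorem IsDiscounting.pos {η : ℕ → ℝ} (hη : IsDiscounting η) (i : ℕ) : 0 < η i :=
  (hη.2.1 (i + 1)).1.trans_lt (hη.1 i.lt_succ_self)

theorem tsemQF_ttF {η : Unit → ℕ → ℝ} {p : AP} {t : Trace AP} (ht : IsBoolTrace t) (n : ℕ)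
    (T : Set (Trace AP)) : tsemQF η (ttF p) (shiftA (fun _ => t) n) T = 1 := by
  rcases ht (0 + n) p with h | h <;> simp [ttF, tsemQF, shiftA] at h ⊢ <;> simp [h]

theorem shiftA_shiftA (ρ : Var → Trace AP) (m n : ℕ) :
    shiftA (shiftA ρ m) n = shiftA ρ (m + n) := by
  funext π k
  simp only [shiftA]
  congr 1
  omega

theorem tsemQF_Fop {η : Unit → ℕ → ℝ} {p : AP} {t : Trace AP} (ht : IsBoolTrace t)
    (φ : TQF AP Unit Unit) (n : ℕ) (T : Set (Trace AP)) :
    tsemQF η (Fop p φ) (shiftA (fun _ => t) n) T =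
      ⨆ i : ℕ, min (tsemQF η φ (shiftA (fun _ => t) (n + i)) T) 1 := by
  simp only [Fop, tsemQF, shiftA_shiftA, tsemQF_ttF ht, prefMin_const_one]

theorem tsemQF_FdOp_atom {η : ℕ → ℝ} (hη : IsDiscounting η) {p : AP} {t : Trace AP}
    (ht : IsBoolTrace t) (n : ℕ) (T : Set (Trace AP)) :
    tsemQF (fun _ : Unit => η) (FdOp p (.atom p ())) (shiftA (fun _ => t) n) T =
      ⨆ i : ℕ, η i * (t (n + i) p : ℝ) := by
  simp only [FdOp, tsemQF, shiftA_shiftA, tsemQF_ttF ht, mul_one]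
  congr 1
  funext i
  simp only [shiftA, zero_add]
  refine min_eq_left (le_trans ?_ (le_prefMin hη.1.antitone (fun i => (hη.2.1 i).2) i))
  exact mul_le_of_le_one_right (hη.2.1 i).1 (t (n + i) p).2.2

theorem bddAbove_discounted {η : ℕ → ℝ} (hη : IsDiscounting η) (p : AP) (t : Trace AP) (n : ℕ) :
    BddAbove (Set.range fun i => η i * (t (n + i) p : ℝ)) := by
  refine ⟨1, ?_⟩
  rintro _ ⟨i, rfl⟩
  exact mul_le_one₀ (hη.2.1 i).2 (t (n + i) p).2.1 (t (n + i) p).2.2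

theorem iSup_discounted_nonneg {η : ℕ → ℝ} (hη : IsDiscounting η) (p : AP) (t : Trace AP)
    (n : ℕ) : 0 ≤ ⨆ i, η i * (t (n + i) p : ℝ) :=
  Real.iSup_nonneg fun i => mul_nonneg (hη.2.1 i).1 (t (n + i) p).2.1

theorem bddAbove_weights (p : AP) (t : Trace AP) (n : ℕ) :
    BddAbove (Set.range fun i => (t (n + i) p : ℝ)) := by
  refine ⟨1, ?_⟩
  rintro _ ⟨i, rfl⟩
  exact (t (n + i) p).2.2

theorem iSup_weights_nonneg (p : AP) (t : Trace AP) (n : ℕ) :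
    0 ≤ ⨆ i, (t (n + i) p : ℝ) :=
  Real.iSup_nonneg fun i => (t (n + i) p).2.1

/-- The value of `G (F_η p) ∨ F G ¬ p` on a Boolean trace, in closed form. -/
theorem tval_eq {η : ℕ → ℝ} (hη : IsDiscounting η) (p : AP) {t : Trace AP}
    (ht : IsBoolTrace t) :
    tval η p t = max (1 - ⨆ n : ℕ, (1 - ⨆ i : ℕ, η i * (t (n + i) p : ℝ)))
      (⨆ n : ℕ, (1 - ⨆ i : ℕ, (t (n + i) p : ℝ))) := by
  have h0 : (fun _ : Unit => t) = shiftA (fun _ => t) 0 := rfl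
  have h1 (n : ℕ) : min (1 - ⨆ i, η i * (t (n + i) p : ℝ)) 1 =
      1 - ⨆ i, η i * (t (n + i) p : ℝ) :=
    min_eq_left (sub_le_self _ (iSup_discounted_nonneg hη p t n))
  have h2 (n : ℕ) : min (1 - ⨆ i, (t (n + i) p : ℝ)) 1 = 1 - ⨆ i, (t (n + i) p : ℝ) :=
    min_eq_left (sub_le_self _ (iSup_weights_nonneg p t n))
  have h3 (n : ℕ) : min (t n p : ℝ) 1 = t n p := min_eq_left (t n p).2.2
  have h4 (n : ℕ) : shiftA (fun _ : Unit => t) n () 0 p = t n p := by simp [shiftA]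
  rw [tval, h0]
  simp only [exForm, Gop, tsemQF, tsemQF_Fop ht, tsemQF_FdOp_atom hη ht, zero_add,
    sub_sub_cancel, h4, h3, h1, h2]

theorem tval_pos_of_isLasso {η : ℕ → ℝ} (hη : IsDiscounting η) (p : AP) {t : Trace AP}
    (ht : IsBoolTrace t) (hl : IsLasso t) : 0 < tval η p t := by
  obtain ⟨N, c, hc, hper⟩ := hl
  rw [tval_eq hη p ht]
  by_cases hz : ∀ m, N ≤ m → (t m p : ℝ) = 0
  · refine lt_max_of_lt_right (zero_lt_one.trans_le ?_)
    refine le_ciSup_of_le ⟨1, ?_⟩ N ?_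
    · rintro _ ⟨n, rfl⟩
      exact sub_le_self _ (iSup_weights_nonneg p t n)
    · simp [fun i => hz (N + i) (Nat.le_add_right N i)]
  · push Not at hz
    obtain ⟨m, hNm, hm⟩ := hz
    have hm1 : (t m p : ℝ) = 1 := (ht m p).resolve_left hm
    have hrep (k : ℕ) : t (m + k * c) = t m := by
      induction k with
      | zero => simp
      | succ k ih =>
        rw [← ih, ← hper (m + k * c) (by omega)]
        congr 1
        ring
    have hreach (n : ℕ) : ∃ i ≤ m + c, (t (n + i) p : ℝ) = 1 := by
      rcases le_total n m with h | h
      · exact ⟨m - n, by omega, by rw [Nat.add_sub_cancel' h, hm1]⟩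
      · have hdiv := Nat.div_add_mod (n - m) c
        have hmod := Nat.mod_lt (n - m) hc
        refine ⟨c - (n - m) % c, by omega, ?_⟩
        have : n + (c - (n - m) % c) = m + ((n - m) / c + 1) * c := by
          rw [add_mul, mul_comm _ c]
          omega
        rw [this, hrep, hm1]
    refine lt_max_of_lt_left ((hη.pos (m + c)).trans_le ?_)
    rw [le_sub_comm]
    refine ciSup_le fun n => sub_le_sub_left ?_ 1
    obtain ⟨i, hi, h1⟩ := hreach n
    refine le_ciSup_of_le (bddAbove_discounted hη p t n) i ?_
    rw [h1, mul_one]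
    exact hη.1.antitone hi

open Classical in
/-- The trace in which every proposition holds exactly at the perfect squares. -/
def squareTrace (AP : Type) : Trace AP := fun n _ => if IsSquare n then 1 else 0

theorem isBoolTrace_squareTrace : IsBoolTrace (squareTrace AP) := by
  intro i p
  by_cases h : IsSquare i <;> simp [squareTrace, h]

theorem tval_squareTrace {η : ℕ → ℝ} (hη : IsDiscounting η) (p : AP) :
    tval η p (squareTrace AP) = 0 := by
  rw [tval_eq hη p isBoolTrace_squareTrace]
  have hright (n : ℕ) : ⨆ i, (squareTrace AP (n + i) p : ℝ) = 1 := by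
    refine le_antisymm (ciSup_le fun i => (squareTrace AP (n + i) p).2.2) ?_
    refine le_ciSup_of_le (bddAbove_weights p _ n) (n * n - n) ?_
    rw [Nat.add_sub_cancel' (Nat.le_mul_self n)]
    simp [squareTrace]
  have hbdd : BddAbove (Set.range fun n => 1 - ⨆ i, η i * (squareTrace AP (n + i) p : ℝ)) := by
    refine ⟨1, ?_⟩
    rintro _ ⟨n, rfl⟩
    exact sub_le_self _ (iSup_discounted_nonneg hη p _ n)
  have hgap (k : ℕ) : ⨆ i, η i * (squareTrace AP (k * k + 1 + i) p : ℝ) ≤ η k := by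
    refine ciSup_le fun i => ?_
    by_cases h : IsSquare (k * k + 1 + i)
    · obtain ⟨r, hr⟩ := h
      have hkr : k + 1 ≤ r := by
        by_contra! hlt
        have := Nat.mul_self_le_mul_self (Nat.le_of_lt_succ hlt)
        omega
      have hki : k ≤ i := by nlinarith [Nat.mul_self_le_mul_self hkr]
      exact (mul_le_of_le_one_right (hη.pos i).le (squareTrace AP _ p).2.2).trans
        (hη.1.antitone hki)
    · simpa [squareTrace, h] using (hη.pos k).le
  have hleft : 1 ≤ ⨆ n, (1 - ⨆ i, η i * (squareTrace AP (n + i) p : ℝ)) := by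
    have hlim : Filter.Tendsto (fun k => 1 - η k) Filter.atTop (nhds 1) := by
      simpa using hη.2.2.const_sub 1
    exact le_of_tendsto' hlim fun k =>
      le_ciSup_of_le hbdd (k * k + 1) (sub_le_sub_left (hgap k) 1)
  simp only [hright, sub_self, ciSup_const]
  exact max_eq_right (sub_nonpos.2 hleft)

/-- Example: a non-ω-regular value-0 language. For the formula
`φ = G (F_η p) ∨ F G ¬ p`: (a) every Boolean lasso has positive satisfaction value;
(b) some Boolean trace has satisfaction value `0`; consequently the set of Boolean traces of
value `0` is nonempty but contains no lasso. -/
theorem stmt_13 {AP : Type} (η : ℕ → ℝ) (hη : IsDiscounting η) (p : AP) :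
    (∀ t : Trace AP, IsBoolTrace t → IsLasso t → 0 < tval η p t) ∧
    (∃ t : Trace AP, IsBoolTrace t ∧ tval η p t = 0) ∧
    ({t : Trace AP | IsBoolTrace t ∧ tval η p t = 0}.Nonempty ∧
      ∀ t ∈ {t : Trace AP | IsBoolTrace t ∧ tval η p t = 0}, ¬ IsLasso t) := by
  have hsq : IsBoolTrace (squareTrace AP) ∧ tval η p (squareTrace AP) = 0 :=
    ⟨isBoolTrace_squareTrace, tval_squareTrace hη p⟩
  exact ⟨fun t ht hl => tval_pos_of_isLasso hη p ht hl, ⟨_, hsq⟩, ⟨_, hsq⟩,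
    fun t ht hl => (tval_pos_of_isLasso hη p ht.1 hl).ne' ht.2⟩

end
end
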